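/- arXiv:2507.15472 — 4 statements merged into one kernel-verified Lean document; each statement's English description precedes it below -/
import Mathlib

section
/- Let T ∈ Γ be a tree with p ≥ 3 pendant vertices. Then the multiplicity of 1 as an eigenvalue of the Laplacian matrix L(T) equals p − 2. -/
/-!
Root the tree `T` at the centre `m` of its base tree. Along a path that starts at a leaf, a
solution of `L x = x` follows the wave `1, 0, -1, -1, 0, 1` of period six, scaled by the value at
the leaf; it vanishes exactly at the distances congruent to `1` modulo `3`.

In the class `Γ` every vertex `v ≠ m` has all the leaves below it at one common distance modulo
`3`, and this residue is `1` wherever `v` has at least two children (`exists_residue`). At such a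
vertex all incoming waves vanish, so they can be added up freely. Hence a vector satisfying the
eigenvalue equation away from `m` is the superposition of the waves emitted by the leaves, and it
is determined by its values at the `p` leaves (`mem_eigenspace_iff_leafSum`).

What is left is the compatibility of the branches at `m`: their waves must agree at `m`, and the
equation at `m` must hold. For a base tree in `Ω_A` (`lapMult_of_one_exceptional`) and for one in
`Ω_B` (`lapMult_of_three_branches`) this amounts to two independent linear conditions on the leaf
values in `ℝ ^ p`, so the multiplicity is `p - 2` by rank-nullity (`lapMult_eq_of_conditions`).
-/

open SimpleGraph Matrix

variable {V : Type*}

/-- A pendant vertex: a vertex of degree one. -/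
def IsPendant (G : SimpleGraph V) (v : V) : Prop := (G.neighborSet v).ncard = 1

/-- A major vertex: a vertex of degree at least three. -/
def IsMajor (G : SimpleGraph V) (v : V) : Prop := 3 ≤ (G.neighborSet v).ncard

/-- `v` lies on the (unique, in a tree) path between `u` and `w`. -/
def OnPath (G : SimpleGraph V) (u w v : V) : Prop :=
  G.dist u v + G.dist v w = G.dist u w

/-- The number of pendant vertices of a graph. -/
noncomputable def numPendant (G : SimpleGraph V) : ℕ :=
  Nat.card {v : V // IsPendant G v}

/-- The Laplacian matrix `D - A` over `ℝ`. -/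
noncomputable def lapMat [Fintype V] (G : SimpleGraph V) : Matrix V V ℝ :=
  letI := Classical.decEq V
  letI : DecidableRel G.Adj := Classical.decRel _
  G.lapMatrix ℝ

/-- The signless Laplacian matrix `D + A` over `ℝ`. -/
noncomputable def signlessLapMat [Fintype V] (G : SimpleGraph V) : Matrix V V ℝ :=
  letI := Classical.decEq V
  letI : DecidableRel G.Adj := Classical.decRel _
  G.degMatrix ℝ + G.adjMatrix ℝ

/-- The multiplicity of `μ` as an eigenvalue of the Laplacian matrix of `G`. -/
noncomputable def lapMult [Finite V] (G : SimpleGraph V) (μ : ℝ) : ℕ :=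
  letI := Fintype.ofFinite V
  letI := Classical.decEq V
  Module.finrank ℝ (Module.End.eigenspace (Matrix.toLin' (lapMat G)) μ)

/-- `μ` is an eigenvalue of the Laplacian matrix of `G`. -/
def HasLapEigen [Finite V] (G : SimpleGraph V) (μ : ℝ) : Prop :=
  letI := Fintype.ofFinite V
  ∃ x : V → ℝ, x ≠ 0 ∧ lapMat G *ᵥ x = μ • x

/-- Membership in the class `𝒬`: a tree in which any two distinct pendant vertices are
at distance `≡ 2 (mod 3)`. -/
def InQ [Finite V] (G : SimpleGraph V) : Prop :=
  G.IsTree ∧ ∀ u v : V, IsPendant G u → IsPendant G v → u ≠ v → G.dist u v % 3 = 2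

/-- A node of a tree: a vertex at distance `≡ 1 (mod 3)` from every pendant vertex. -/
def IsNode (G : SimpleGraph V) (η : V) : Prop :=
  ∀ u : V, IsPendant G u → G.dist η u % 3 = 1

/-- Membership in the class `𝒫`: a path on `n` vertices with `n ≡ 2 (mod 3)`. -/
def InP [Finite V] (G : SimpleGraph V) : Prop :=
  G.IsTree ∧ (∀ v : V, (G.neighborSet v).ncard ≤ 2) ∧ Nat.card V % 3 = 2

/-- The induced subgraph on `S` is a tree of class `𝒬` and `b ∈ S` is a node of it. -/
def NodeAttach [Finite V] (T : SimpleGraph V) (S : Set V) (b : V) : Prop :=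
  ∃ hb : b ∈ S, InQ (T.induce S) ∧ IsNode (T.induce S) ⟨b, hb⟩

/-- The induced subgraph on `S` is a path of class `𝒫` and `b ∈ S` is a pendant vertex
of it. -/
def PendantAttach [Finite V] (T : SimpleGraph V) (S : Set V) (b : V) : Prop :=
  ∃ hb : b ∈ S, InP (T.induce S) ∧ IsPendant (T.induce S) ⟨b, hb⟩

/-- The tree `T` is obtained from a tree `H` consisting of three internally disjoint
paths `P_{u j, m}` (`j = 0,1,2`) joined at `m`, whose three leg lengths satisfy `cond`,
together with trees `T i` (`i : Fin k`) of class `𝒬 ∪ 𝒫` (realized as the induced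
subgraphs on the sets `S i`), by identifying for each `i` a vertex `a i` of `H`, lying on
some `P_{u j, m}` with `d(a i, u j) ≡ 1 (mod 3)`, with a vertex `b i` of `T i` which is a
node of `T i` if `T i ∈ 𝒬` and a pendant vertex of `T i` if `T i ∈ 𝒫`. -/
def InGammaWith [Finite V] (T : SimpleGraph V) (cond : ℕ → ℕ → ℕ → Prop) : Prop :=
  ∃ (m : V) (u : Fin 3 → V) (k : ℕ) (a : Fin k → V) (S : Fin k → Set V),
    T.IsTree ∧
    Function.Injective u ∧
    (∀ j, u j ≠ m) ∧
    (∀ j j', j ≠ j' → ∀ v, OnPath T (u j) m v → OnPath T (u j') m v → v = m) ∧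
    cond (T.dist (u 0) m) (T.dist (u 1) m) (T.dist (u 2) m) ∧
    (∀ i, ∃ j, OnPath T (u j) m (a i) ∧ T.dist (a i) (u j) % 3 = 1) ∧
    (∀ i, S i ∩ {v | ∃ j, OnPath T (u j) m v} = {a i}) ∧
    (∀ i i', i ≠ i' → ∀ v ∈ S i ∩ S i', v = a i ∧ v = a i') ∧
    (∀ v, (∃ j, OnPath T (u j) m v) ∨ ∃ i, v ∈ S i) ∧
    (∀ v w, T.Adj v w →
      ((∃ j, OnPath T (u j) m v) ∧ (∃ j, OnPath T (u j) m w)) ∨ ∃ i, v ∈ S i ∧ w ∈ S i) ∧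
    (∀ i, NodeAttach T (S i) (a i) ∨ PendantAttach T (S i) (a i))

/-- The class `Γ_A`: base tree in `Ω_A`. -/
def InGammaA [Finite V] (T : SimpleGraph V) : Prop :=
  InGammaWith T (fun d₁ d₂ d₃ => d₁ % 3 = 1 ∧ d₂ % 3 = 1 ∧ d₃ % 3 ≠ 1)

/-- The class `Γ_B`: base tree in `Ω_B`. -/
def InGammaB [Finite V] (T : SimpleGraph V) : Prop :=
  InGammaWith T (fun d₁ d₂ d₃ => d₁ % 3 = 2 ∧ d₂ % 3 = 0 ∧ d₃ % 3 = 0)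

/-- The class `Γ = Γ_A ∪ Γ_B`. -/
def InGamma [Finite V] (T : SimpleGraph V) : Prop := InGammaA T ∨ InGammaB T

/-! ### Distances in trees -/

theorem tree_pred_unique {T : SimpleGraph V} (hT : T.IsTree) {r v w₁ w₂ : V}
    (h₁ : T.Adj v w₁) (h₂ : T.Adj v w₂) (d₁ : T.dist r v = T.dist r w₁ + 1)
    (d₂ : T.dist r v = T.dist r w₂ + 1) : w₁ = w₂ := by
  obtain ⟨q₁, hq₁⟩ := hT.connected.exists_walk_length_eq_dist w₁ r
  obtain ⟨q₂, hq₂⟩ := hT.connected.exists_walk_length_eq_dist w₂ r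
  have p₁ : (Walk.cons h₁ q₁).IsPath := Walk.isPath_of_length_eq_dist _ (by
    rw [Walk.length_cons, hq₁, T.dist_comm, ← d₁, T.dist_comm])
  have p₂ : (Walk.cons h₂ q₂).IsPath := Walk.isPath_of_length_eq_dist _ (by
    rw [Walk.length_cons, hq₂, T.dist_comm, ← d₂, T.dist_comm])
  have h := congrArg (fun p : T.Path v r => p.1.snd)
    ((hT.isAcyclic.subsingleton_path v r).elim ⟨_, p₁⟩ ⟨_, p₂⟩)
  simpa using h

theorem tree_pred_exists {T : SimpleGraph V} (hT : T.IsTree) {r v : V} (h : v ≠ r) :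
    ∃ w, T.Adj v w ∧ T.dist r v = T.dist r w + 1 := by
  obtain ⟨q, hq⟩ := hT.connected.exists_walk_length_eq_dist v r
  cases q with
  | nil => exact absurd rfl h
  | @cons _ w _ hvw q =>
    refine ⟨w, hvw, ?_⟩
    have h1 := dist_le q
    have h2 := hT.dist_eq_dist_add_one_of_adj r hvw
    rw [Walk.length_cons] at hq
    rw [T.dist_comm (v := r)] at hq h1
    omega

/-- A geodesic from `r` to `v` that is continued by a step away from `r` and then
geodesically to `l` stays geodesic: in a tree there is no other way back. -/
theorem tree_dist_extend {T : SimpleGraph V} (hT : T.IsTree) {r v c l : V}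
    (hvc : T.Adj v c) (h1 : T.dist r c = T.dist r v + 1)
    (h2 : T.dist l v = T.dist l c + 1) : T.dist r l = T.dist r v + T.dist l v := by
  generalize hn : T.dist l c = n
  induction n generalizing v c with
  | zero =>
    have : l = c := hT.connected.dist_eq_zero_iff.1 hn
    subst this
    omega
  | succ n ih =>
    have hcl : c ≠ l := by
      rintro rfl
      simp at hn
    obtain ⟨c', hcc', hd⟩ := tree_pred_exists hT hcl
    have h3 : T.dist r c' = T.dist r c + 1 := by
      rcases hT.dist_eq_dist_add_one_of_adj r hcc' with h | h
      · have := tree_pred_unique hT hcc' hvc.symm h h1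
        subst this
        omega
      · exact h
    have := ih hcc' h3 hd (by omega)
    omega

/-- With `T` rooted at `m`, the vertex `l` is `v` or a descendant of `v`. -/
def Below (T : SimpleGraph V) (m v l : V) : Prop := T.dist m l = T.dist m v + T.dist v l

/-- With `T` rooted at `m`, the vertex `c` is a child of `v`. -/
def IsChild (T : SimpleGraph V) (m v c : V) : Prop := T.Adj v c ∧ T.dist m c = T.dist m v + 1

theorem below_refl (T : SimpleGraph V) (m v : V) : Below T m v v := by simp [Below]

theorem below_child {T : SimpleGraph V} (hT : T.IsTree) {m v c l : V} (hc : IsChild T m v c)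
    (h : Below T m c l) : Below T m v l ∧ T.dist v l = T.dist c l + 1 := by
  have h1 := hT.connected.dist_triangle (u := v) (v := c) (w := l)
  have h2 := hT.connected.dist_triangle (u := m) (v := v) (w := l)
  have h3 := dist_eq_one_iff_adj.2 hc.1
  have h4 := hc.2
  unfold Below at *
  omega

theorem below_of_toward {T : SimpleGraph V} (hT : T.IsTree) {m v c l : V}
    (hc : IsChild T m v c) (h : T.dist l v = T.dist l c + 1) : Below T m c l := by
  have := tree_dist_extend hT hc.1 hc.2 h
  have h4 := hc.2
  unfold Below
  rw [T.dist_comm (u := c)]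
  omega

theorem exists_child_below {T : SimpleGraph V} (hT : T.IsTree) {m v l : V}
    (h : Below T m v l) (hne : v ≠ l) : ∃ c, IsChild T m v c ∧ Below T m c l := by
  obtain ⟨c, hvc, hd⟩ := tree_pred_exists hT hne
  have hc : IsChild T m v c := by
    refine ⟨hvc, ?_⟩
    rcases hT.dist_eq_dist_add_one_of_adj m hvc with h3 | h3
    · have h2 := hT.connected.dist_triangle (u := m) (v := c) (w := l)
      unfold Below at h
      rw [T.dist_comm (u := v)] at h
      rw [T.dist_comm (u := c)] at h2
      omega
    · exact h3
  exact ⟨c, hc, below_of_toward hT hc hd⟩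

theorem child_below_unique {T : SimpleGraph V} (hT : T.IsTree) {m v l c₁ c₂ : V}
    (h₁ : IsChild T m v c₁) (h₂ : IsChild T m v c₂) (b₁ : Below T m c₁ l)
    (b₂ : Below T m c₂ l) : c₁ = c₂ := by
  have e₁ := (below_child hT h₁ b₁).2
  have e₂ := (below_child hT h₂ b₂).2
  refine tree_pred_unique (r := l) hT h₁.1 h₂.1 ?_ ?_
  · rwa [T.dist_comm, T.dist_comm (v := c₁)]
  · rwa [T.dist_comm, T.dist_comm (v := c₂)]

theorem child_ne_root {T : SimpleGraph V} {m v c : V} (h : IsChild T m v c) : c ≠ m := by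
  rintro rfl
  have := h.2
  simp at this

theorem parent_unique {T : SimpleGraph V} (hT : T.IsTree) {m v w c : V}
    (h₁ : IsChild T m v c) (h₂ : IsChild T m w c) : v = w :=
  tree_pred_unique hT h₁.1.symm h₂.1.symm h₁.2 h₂.2

theorem parent_exists {T : SimpleGraph V} (hT : T.IsTree) {m c : V} (h : c ≠ m) :
    ∃ v, IsChild T m v c := by
  obtain ⟨v, h1, h2⟩ := tree_pred_exists hT h
  exact ⟨v, h1.symm, h2⟩

theorem adj_cases {T : SimpleGraph V} (hT : T.IsTree) (m : V) {v w : V} (h : T.Adj v w) :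
    IsChild T m v w ∨ IsChild T m w v := by
  rcases hT.dist_eq_dist_add_one_of_adj m h with h3 | h3
  · exact Or.inr ⟨h.symm, h3⟩
  · exact Or.inl ⟨h, h3⟩

theorem not_isChild_symm {T : SimpleGraph V} {m v w : V} (h₁ : IsChild T m v w)
    (h₂ : IsChild T m w v) : False := by
  have := h₁.2
  have := h₂.2
  omega

theorem pendant_unique {T : SimpleGraph V} {v w₁ w₂ : V} (h : IsPendant T v)
    (h₁ : T.Adj v w₁) (h₂ : T.Adj v w₂) : w₁ = w₂ := by
  obtain ⟨a, ha⟩ := Set.ncard_eq_one.1 h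
  have e₁ : w₁ ∈ T.neighborSet v := h₁
  have e₂ : w₂ ∈ T.neighborSet v := h₂
  rw [ha] at e₁ e₂
  exact e₁.trans e₂.symm

theorem pendant_no_child {T : SimpleGraph V} (hT : T.IsTree) {m v c : V} (hv : v ≠ m)
    (h : IsPendant T v) : ¬ IsChild T m v c := by
  intro hc
  obtain ⟨w, hw⟩ := parent_exists hT hv
  have := pendant_unique h hc.1 hw.1.symm
  subst this
  exact not_isChild_symm hc hw

theorem exists_child_of_not_pendant {T : SimpleGraph V} (hT : T.IsTree) {m v : V}
    (hv : v ≠ m) (h : ¬ IsPendant T v) : ∃ c, IsChild T m v c := by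
  by_contra! hno
  obtain ⟨w, hw⟩ := parent_exists hT hv
  refine h (Set.ncard_eq_one.2 ⟨w, ?_⟩)
  ext x
  constructor
  · intro hx
    rcases adj_cases hT m hx with h1 | h1
    · exact absurd h1 (hno x)
    · exact parent_unique hT h1 hw
  · rintro rfl
    exact hw.1.symm

theorem exists_pendant_below [Finite V] {T : SimpleGraph V} (hT : T.IsTree) {m v : V}
    (hv : v ≠ m) : ∃ l, IsPendant T l ∧ Below T m v l := by
  have : Nonempty {l // Below T m v l} := ⟨⟨v, below_refl T m v⟩⟩
  -- a descendant of `v` at maximal depth has no children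
  obtain ⟨⟨l, hl⟩, hmax⟩ := Finite.exists_max (fun l : {l // Below T m v l} => T.dist m l.1)
  refine ⟨l, ?_, hl⟩
  by_contra hp
  have hlm : l ≠ m := by
    rintro rfl
    have := hT.connected.pos_dist_of_ne hv.symm
    unfold Below at hl
    simp at hl
    omega
  obtain ⟨c, hc⟩ := exists_child_of_not_pendant hT hlm hp
  have hb : Below T m v c := by
    have h1 := hT.connected.dist_triangle (u := v) (v := l) (w := c)
    have h2 := hT.connected.dist_triangle (u := m) (v := v) (w := c)
    have h3 := dist_eq_one_iff_adj.2 hc.1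
    have h4 := hc.2
    unfold Below at *
    omega
  have := hmax ⟨c, hb⟩
  have h4 := hc.2
  simp only at this
  omega

/-! ### Eigenvectors for the eigenvalue one and leaf data -/

/-- The values `1, 0, -1, -1, 0, 1, …` (period six) that an eigenvector for the eigenvalue `1`
takes along a path starting at a pendant vertex with value `1`. -/
def wave (n : ℕ) : ℝ :=
  if n % 6 = 0 then 1 else if n % 6 = 1 then 0 else if n % 6 = 2 then -1
  else if n % 6 = 3 then -1 else if n % 6 = 4 then 0 else 1

theorem wave_add_two (n : ℕ) : wave (n + 2) = wave (n + 1) - wave n := by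
  have h : n % 6 < 6 := Nat.mod_lt _ (by norm_num)
  unfold wave
  generalize hr : n % 6 = r at *
  interval_cases r <;> simp [Nat.add_mod, hr]

theorem wave_eq_zero_iff (n : ℕ) : wave n = 0 ↔ n % 3 = 1 := by
  have h3 : n % 3 = n % 6 % 3 := by omega
  have h : n % 6 < 6 := Nat.mod_lt _ (by norm_num)
  unfold wave
  rw [h3]
  generalize n % 6 = r at *
  interval_cases r <;> simp

theorem wave_succ_of_mod_two {n : ℕ} (hn : n % 3 = 2) : wave (n + 1) = wave n := by
  have h1 := wave_add_two (n - 1)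
  have h2 : wave (n - 1) = 0 := (wave_eq_zero_iff _).2 (by omega)
  rw [show n - 1 + 2 = n + 1 by omega, show n - 1 + 1 = n by omega, h2] at h1
  linarith

open Classical in
/-- The children of `v` when `T` is rooted at `m`. -/
noncomputable def children [Fintype V] (T : SimpleGraph V) (m v : V) : Finset V :=
  Finset.univ.filter (IsChild T m v)

theorem mem_children [Fintype V] {T : SimpleGraph V} {m v c : V} :
    c ∈ children T m v ↔ IsChild T m v c := by simp [children]

open Classical in
/-- The linear functional sending leaf data `α` to the sum of `f (d(v,l)) * α l` over the
pendant vertices `l` at or below `v`. -/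
noncomputable def leafSum [Fintype V] (T : SimpleGraph V) (m : V) (f : ℕ → ℝ) (v : V) :
    ({l : V // IsPendant T l} → ℝ) →ₗ[ℝ] ℝ :=
  ∑ l, (if Below T m v l.1 then f (T.dist v l.1) else 0) • LinearMap.proj l

open Classical in
theorem leafSum_apply [Fintype V] (T : SimpleGraph V) (m : V) (f : ℕ → ℝ) (v : V)
    (α : {l : V // IsPendant T l} → ℝ) :
    leafSum T m f v α = ∑ l, (if Below T m v l.1 then f (T.dist v l.1) else 0) * α l := by
  simp only [leafSum, LinearMap.sum_apply, LinearMap.smul_apply, LinearMap.proj_apply, smul_eq_mul]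

theorem leafSum_congr [Fintype V] {T : SimpleGraph V} {m v : V} {f g : ℕ → ℝ}
    (h : ∀ l, IsPendant T l → Below T m v l → f (T.dist v l) = g (T.dist v l))
    (α : {l : V // IsPendant T l} → ℝ) : leafSum T m f v α = leafSum T m g v α := by
  classical
  rw [leafSum_apply, leafSum_apply]
  refine Finset.sum_congr rfl fun l _ => ?_
  by_cases hb : Below T m v l.1
  · rw [if_pos hb, if_pos hb, h l.1 l.2 hb]
  · rw [if_neg hb, if_neg hb]

theorem leafSum_eq_zero [Fintype V] {T : SimpleGraph V} {m v : V} {f : ℕ → ℝ}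
    (h : ∀ l, IsPendant T l → Below T m v l → f (T.dist v l) = 0)
    (α : {l : V // IsPendant T l} → ℝ) : leafSum T m f v α = 0 := by
  rw [leafSum_congr (g := fun _ => 0) h, leafSum_apply]
  simp

theorem leafSum_sub [Fintype V] (T : SimpleGraph V) (m : V) (f g : ℕ → ℝ) (v : V)
    (α : {l : V // IsPendant T l} → ℝ) :
    leafSum T m (fun n => f n - g n) v α = leafSum T m f v α - leafSum T m g v α := by
  classical
  rw [leafSum_apply, leafSum_apply, leafSum_apply, ← Finset.sum_sub_distrib]
  refine Finset.sum_congr rfl fun l _ => ?_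
  split_ifs <;> ring

theorem leafSum_pendant [Fintype V] {T : SimpleGraph V} (hT : T.IsTree) {m v : V}
    (hv : v ≠ m) (hp : IsPendant T v) (f : ℕ → ℝ) (α : {l : V // IsPendant T l} → ℝ) :
    leafSum T m f v α = f 0 * α ⟨v, hp⟩ := by
  classical
  rw [leafSum_apply, Finset.sum_eq_single ⟨v, hp⟩]
  · simp [below_refl]
  · rintro ⟨l, hl⟩ - hne
    rw [if_neg, zero_mul]
    intro hb
    have hvl : v ≠ l := fun h => hne (Subtype.ext h.symm)
    obtain ⟨c, hc, -⟩ := exists_child_below hT hb hvl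
    exact pendant_no_child hT hv hp hc
  · simp

theorem leafSum_rec [Fintype V] {T : SimpleGraph V} (hT : T.IsTree) {m v : V}
    (hp : ¬ IsPendant T v) (f : ℕ → ℝ) (α : {l : V // IsPendant T l} → ℝ) :
    leafSum T m f v α = ∑ c ∈ children T m v, leafSum T m (fun n => f (n + 1)) c α := by
  classical
  simp_rw [leafSum_apply]
  rw [Finset.sum_comm]
  refine Finset.sum_congr rfl fun l _ => ?_
  by_cases hb : Below T m v l.1
  · have hvl : v ≠ l.1 := by
      intro h
      exact hp (h ▸ l.2)
    obtain ⟨c, hc, hcb⟩ := exists_child_below hT hb hvl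
    rw [if_pos hb, Finset.sum_eq_single c]
    · rw [if_pos hcb, (below_child hT hc hcb).2]
    · intro c' hc' hne
      rw [if_neg, zero_mul]
      intro hb'
      exact hne (child_below_unique hT (mem_children.1 hc') hc hb' hcb)
    · intro h
      exact absurd (mem_children.2 hc) h
  · rw [if_neg hb, zero_mul]
    symm
    refine Finset.sum_eq_zero fun c hc => ?_
    rw [if_neg, zero_mul]
    intro hb'
    exact hb (below_child hT (mem_children.1 hc) hb').1

open Classical in
theorem leafSum_single [Fintype V] {T : SimpleGraph V} {m v : V} (f : ℕ → ℝ) {l : V}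
    (hl : IsPendant T l) (t : ℝ) :
    leafSum T m f v (Pi.single ⟨l, hl⟩ t) = if Below T m v l then f (T.dist v l) * t else 0 := by
  rw [leafSum_apply, Finset.sum_eq_single ⟨l, hl⟩]
  · simp
  · intro b _ hb
    simp [hb]
  · simp

/-- Induction from the leaves towards the root `m`. -/
theorem leaf_induction [Finite V] {T : SimpleGraph V} {m : V} {P : V → Prop}
    (h : ∀ v, v ≠ m → (∀ c, IsChild T m v c → P c) → P v) : ∀ v, v ≠ m → P v := by
  obtain ⟨B, hB⟩ := (Set.finite_range (fun v => T.dist m v)).bddAbove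
  have hB' : ∀ v, T.dist m v ≤ B := fun v => hB ⟨v, rfl⟩
  have key : ∀ n v, v ≠ m → B - T.dist m v < n → P v := by
    intro n
    induction n with
    | zero => intro v _ h; omega
    | succ n ih =>
      intro v hv hn
      refine h v hv fun c hc => ih c (child_ne_root hc) ?_
      have := hc.2
      have := hB' c
      omega
  exact fun v hv => key _ v hv (Nat.lt_succ_self _)

/-- The eigenvalue equation `(L - 1) x = 0`, written along the parent-child edges. -/
theorem mem_eigenspace_iff [Fintype V] [DecidableEq V] {T : SimpleGraph V} (hT : T.IsTree)
    (m : V) (x : V → ℝ) :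
    x ∈ Module.End.eigenspace (Matrix.toLin' (lapMat T)) 1 ↔
      (∀ v w, IsChild T m w v → ∑ c ∈ children T m v, (x v - x c) = x w) ∧
        ∑ c ∈ children T m m, (x m - x c) = x m := by
  classical
  have key : ∀ v, (lapMat T *ᵥ x) v = ∑ w ∈ Finset.univ.filter (T.Adj v), (x v - x w) := by
    intro v
    unfold lapMat
    rw [lapMatrix_mulVec_apply, Finset.sum_sub_distrib, Finset.sum_const, nsmul_eq_mul]
    rw [← card_neighborFinset_eq_degree, neighborFinset_eq_filter]
  have hroot : Finset.univ.filter (T.Adj m) = children T m m := by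
    ext w
    rw [mem_children]
    simp only [Finset.mem_filter, Finset.mem_univ, true_and]
    refine ⟨fun h => ⟨h, ?_⟩, fun h => h.1⟩
    rw [dist_eq_one_iff_adj.2 h]
    simp
  have hother : ∀ v w, IsChild T m w v →
      ∑ c ∈ Finset.univ.filter (T.Adj v), (x v - x c)
        = (x v - x w) + ∑ c ∈ children T m v, (x v - x c) := by
    intro v w hw
    have : Finset.univ.filter (T.Adj v) = insert w (children T m v) := by
      ext c
      simp only [Finset.mem_filter, Finset.mem_univ, true_and, Finset.mem_insert, mem_children]
      constructor
      · intro hc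
        rcases adj_cases hT m hc with h | h
        · exact Or.inr h
        · exact Or.inl (parent_unique hT h hw)
      · rintro (rfl | h)
        · exact hw.1.symm
        · exact h.1
    rw [this, Finset.sum_insert]
    intro h
    exact not_isChild_symm hw (mem_children.1 h)
  rw [Module.End.mem_eigenspace_iff, Matrix.toLin'_apply, one_smul, funext_iff]
  simp_rw [key]
  constructor
  · intro h
    refine ⟨fun v w hw => ?_, ?_⟩
    · have := h v
      rw [hother v w hw] at this
      linarith
    · rw [← hroot]
      exact h m
  · rintro ⟨h1, h2⟩ v
    by_cases hv : v = m
    · subst hv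
      rw [hroot]
      exact h2
    · obtain ⟨w, hw⟩ := parent_exists hT hv
      rw [hother v w hw, h1 v w hw]
      ring

/-- Away from the root, the wave sums at a vertex can be computed through any one child:
branching only happens where all waves from below vanish. -/
theorem leafSum_child [Fintype V] {T : SimpleGraph V} (hT : T.IsTree) {m : V}
    (hbr : ∀ v c₁ c₂, v ≠ m → IsChild T m v c₁ → IsChild T m v c₂ → c₁ ≠ c₂ →
      ∀ l, IsPendant T l → Below T m v l → T.dist v l % 3 = 1)
    {v c : V} (hv : v ≠ m) (hc : IsChild T m v c) (α : {l : V // IsPendant T l} → ℝ) :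
    leafSum T m (fun n => wave (n + 1)) c α = leafSum T m wave v α := by
  have hp : ¬ IsPendant T v := fun h => pendant_no_child hT hv h hc
  by_cases hex : ∃ c', IsChild T m v c' ∧ c ≠ c'
  · obtain ⟨c', hc', hne⟩ := hex
    have h1 := hbr v c c' hv hc hc' hne
    rw [leafSum_eq_zero (v := v), leafSum_eq_zero (v := c)]
    · intro l hl hb
      obtain ⟨h2, h3⟩ := below_child hT hc hb
      rw [← h3]
      exact (wave_eq_zero_iff _).2 (h1 l hl h2)
    · intro l hl hb
      exact (wave_eq_zero_iff _).2 (h1 l hl hb)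
  · push Not at hex
    rw [leafSum_rec hT hp]
    have : children T m v = {c} := by
      ext c'
      rw [mem_children, Finset.mem_singleton]
      exact ⟨fun h => (hex c' h).symm, fun h => h ▸ hc⟩
    rw [this, Finset.sum_singleton]

/-- Moving the wave sum one further step towards the root. -/
theorem leafSum_up [Fintype V] {T : SimpleGraph V} (hT : T.IsTree) {m v : V}
    (hp : ¬ IsPendant T v) (α : {l : V // IsPendant T l} → ℝ) :
    leafSum T m (fun n => wave (n + 1)) v α =
      ∑ c ∈ children T m v, (leafSum T m (fun n => wave (n + 1)) c α - leafSum T m wave c α) := by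
  rw [leafSum_rec hT hp]
  refine Finset.sum_congr rfl fun c _ => ?_
  rw [← leafSum_sub]
  exact leafSum_congr (fun l _ _ => wave_add_two _) α

/-- Eigenvectors are exactly the superpositions of waves sent from the leaves, subject to
compatibility at the root. -/
theorem mem_eigenspace_iff_leafSum [Fintype V] [DecidableEq V] {T : SimpleGraph V}
    (hT : T.IsTree) {m : V}
    (hbr : ∀ v c₁ c₂, v ≠ m → IsChild T m v c₁ → IsChild T m v c₂ → c₁ ≠ c₂ →
      ∀ l, IsPendant T l → Below T m v l → T.dist v l % 3 = 1) (x : V → ℝ) :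
    x ∈ Module.End.eigenspace (Matrix.toLin' (lapMat T)) 1 ↔
      (∀ v, v ≠ m → x v = leafSum T m wave v (fun l => x l.1)) ∧
      (∀ c ∈ children T m m, x m = leafSum T m (fun n => wave (n + 1)) c (fun l => x l.1)) ∧
      ∑ c ∈ children T m m, (x m - leafSum T m wave c (fun l => x l.1)) = x m := by
  rw [mem_eigenspace_iff hT m]
  set α : {l : V // IsPendant T l} → ℝ := fun l => x l.1 with hα
  have w0 : wave 0 = 1 := by simp [wave]
  have w1 : wave 1 = 0 := by simp [wave]
  have hleafC : ∀ v, v ≠ m → IsPendant T v → children T m v = ∅ := by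
    intro v hv hp
    refine Finset.eq_empty_of_forall_notMem fun c hc => ?_
    exact pendant_no_child hT hv hp (mem_children.1 hc)
  constructor
  · rintro ⟨h1, h2⟩
    have key : ∀ v, v ≠ m → x v = leafSum T m wave v α ∧
        ∀ w, IsChild T m w v → x w = leafSum T m (fun n => wave (n + 1)) v α := by
      refine leaf_induction (T := T) fun v hv ih => ?_
      by_cases hp : IsPendant T v
      · refine ⟨?_, fun w hw => ?_⟩
        · rw [leafSum_pendant hT hv hp, w0, one_mul]
        · rw [leafSum_pendant hT hv hp, zero_add, w1, zero_mul, ← h1 v w hw, hleafC v hv hp,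
            Finset.sum_empty]
      · obtain ⟨c, hc⟩ := exists_child_of_not_pendant hT hv hp
        refine ⟨?_, fun w hw => ?_⟩
        · rw [(ih c hc).2 v hc]
          exact leafSum_child hT hbr hv hc α
        · rw [leafSum_up hT hp, ← h1 v w hw]
          refine Finset.sum_congr rfl fun c hc => ?_
          rw [(ih c (mem_children.1 hc)).1, (ih c (mem_children.1 hc)).2 v (mem_children.1 hc)]
    refine ⟨fun v hv => (key v hv).1, fun c hc => ?_, ?_⟩
    · rw [mem_children] at hc
      exact (key c (child_ne_root hc)).2 m hc
    · rw [← h2]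
      refine Finset.sum_congr rfl fun c hc => ?_
      rw [mem_children] at hc
      rw [(key c (child_ne_root hc)).1, h2]
  · rintro ⟨h1, h2, h3⟩
    refine ⟨fun v w hw => ?_, ?_⟩
    · have hv := child_ne_root hw
      have hxw : x w = leafSum T m (fun n => wave (n + 1)) v α := by
        by_cases hwm : w = m
        · subst hwm
          exact h2 v (mem_children.2 hw)
        · rw [h1 w hwm]
          exact (leafSum_child hT hbr hwm hw α).symm
      rw [hxw]
      by_cases hp : IsPendant T v
      · rw [leafSum_pendant hT hv hp, zero_add, w1, zero_mul, hleafC v hv hp, Finset.sum_empty]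
      · rw [leafSum_up hT hp]
        refine Finset.sum_congr rfl fun c hc => ?_
        rw [mem_children] at hc
        rw [h1 v hv, h1 c (child_ne_root hc), leafSum_child hT hbr hv hc α]
    · rw [← h3]
      refine Finset.sum_congr rfl fun c hc => ?_
      rw [mem_children] at hc
      rw [h1 c (child_ne_root hc), h3]

/-- If compatibility at the root amounts to two independent linear conditions on the leaf data,
the multiplicity is the number of leaves minus two. -/
theorem lapMult_eq_of_conditions [Fintype V] {T : SimpleGraph V} (hT : T.IsTree) {m c₀ : V}
    (hbr : ∀ v c₁ c₂, v ≠ m → IsChild T m v c₁ → IsChild T m v c₂ → c₁ ≠ c₂ →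
      ∀ l, IsPendant T l → Below T m v l → T.dist v l % 3 = 1)
    (hm : ¬ IsPendant T m) (hc₀ : IsChild T m m c₀)
    (φ : ({l : V // IsPendant T l} → ℝ) →ₗ[ℝ] ℝ × ℝ) (hφ : Function.Surjective φ)
    (hker : ∀ α, φ α = 0 ↔
      (∀ c ∈ children T m m, leafSum T m (fun n => wave (n + 1)) c₀ α =
        leafSum T m (fun n => wave (n + 1)) c α) ∧
      ∑ c ∈ children T m m,
        (leafSum T m (fun n => wave (n + 1)) c₀ α - leafSum T m wave c α) =
          leafSum T m (fun n => wave (n + 1)) c₀ α) :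
    lapMult T 1 = numPendant T - 2 := by
  classical
  let Ψ : ({l : V // IsPendant T l} → ℝ) →ₗ[ℝ] (V → ℝ) := LinearMap.pi fun v =>
    if v = m then leafSum T m (fun n => wave (n + 1)) c₀ else leafSum T m wave v
  have Ψm : ∀ α, Ψ α m = leafSum T m (fun n => wave (n + 1)) c₀ α := by
    intro α
    simp [Ψ]
  have Ψv : ∀ α v, v ≠ m → Ψ α v = leafSum T m wave v α := by
    intro α v hv
    simp [Ψ, hv]
  have Ψl : ∀ α, (fun l : {l : V // IsPendant T l} => Ψ α l.1) = α := by
    intro α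
    funext ⟨l, hl⟩
    have hlm : l ≠ m := by
      rintro rfl
      exact hm hl
    rw [Ψv α l hlm, leafSum_pendant hT hlm hl]
    simp [wave]
  have Ψinj : Function.Injective Ψ := by
    intro α β h
    rw [← Ψl α, ← Ψl β, h]
  have hmap : ∀ (inst : DecidableEq V),
      Module.End.eigenspace (Matrix.toLin' (lapMat T)) 1 = (LinearMap.ker φ).map Ψ := by
    intro inst
    ext x
    rw [mem_eigenspace_iff_leafSum hT hbr]
    constructor
    · rintro ⟨h1, h2, h3⟩
      have hxm := h2 c₀ (mem_children.2 hc₀)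
      refine ⟨fun l => x l.1, ?_, ?_⟩
      · simp only [SetLike.mem_coe, LinearMap.mem_ker]
        rw [hker, ← hxm]
        exact ⟨h2, h3⟩
      · funext v
        by_cases hv : v = m
        · subst hv
          rw [Ψm, ← hxm]
        · rw [Ψv _ _ hv, ← h1 v hv]
    · rintro ⟨α, hα, rfl⟩
      simp only [SetLike.mem_coe, LinearMap.mem_ker] at hα
      rw [hker] at hα
      rw [Ψl, Ψm]
      exact ⟨fun v hv => Ψv α v hv, hα.1, hα.2⟩
  have hrank := LinearMap.finrank_range_add_finrank_ker φ
  rw [LinearMap.range_eq_top.2 hφ, finrank_top] at hrank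
  simp only [Module.finrank_prod, Module.finrank_self, Module.finrank_fintype_fun_eq_card]
    at hrank
  unfold lapMult numPendant
  rw [Subsingleton.elim (Fintype.ofFinite V) ‹Fintype V›, hmap,
    ← (Submodule.equivMapOfInjective Ψ Ψinj (LinearMap.ker φ)).finrank_eq, Nat.card_eq_fintype_card]
  omega

/-! ### The two types of root -/

theorem residue_eq_dist [Finite V] {T : SimpleGraph V} (hT : T.IsTree) {m : V} {ρ : V → ℕ}
    (h1 : ∀ l, l ≠ m → IsPendant T l → ρ l % 3 = 0)
    (h2 : ∀ v c, v ≠ m → IsChild T m v c → ρ v % 3 = (ρ c + 1) % 3) :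
    ∀ v, v ≠ m → ∀ l, IsPendant T l → Below T m v l → T.dist v l % 3 = ρ v % 3 := by
  refine leaf_induction (T := T) fun v hv ih l hl hb => ?_
  by_cases hvl : v = l
  · subst hvl
    rw [h1 v hv hl]
    simp
  · obtain ⟨c, hc, hcb⟩ := exists_child_below hT hb hvl
    have e1 := ih c hc l hl hcb
    have e2 := (below_child hT hc hcb).2
    have e3 := h2 v c hv hc
    omega

/-- The case in which all branches at the root but one carry waves vanishing at the root. -/
theorem lapMult_of_one_exceptional [Finite V] {T : SimpleGraph V} (hT : T.IsTree) {m : V}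
    {ρ : V → ℕ}
    (h1 : ∀ l, l ≠ m → IsPendant T l → ρ l % 3 = 0)
    (h2 : ∀ v c, v ≠ m → IsChild T m v c → ρ v % 3 = (ρ c + 1) % 3)
    (h3 : ∀ v c₁ c₂, v ≠ m → IsChild T m v c₁ → IsChild T m v c₂ → c₁ ≠ c₂ → ρ v % 3 = 1)
    {c₀ c₂ : V} (hc₀ : IsChild T m m c₀) (hc₂ : IsChild T m m c₂) (hne : c₀ ≠ c₂)
    (hρ₂ : ρ c₂ % 3 ≠ 0) (hρ : ∀ c, IsChild T m m c → c ≠ c₂ → ρ c % 3 = 0) :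
    lapMult T 1 = numPendant T - 2 := by
  classical
  let _ := Fintype.ofFinite V
  have hd := residue_eq_dist hT h1 h2
  have hm : ¬ IsPendant T m := fun h => hne (pendant_unique h hc₀.1 hc₂.1)
  have hU : ∀ c, IsChild T m m c → c ≠ c₂ → ∀ α,
      leafSum T m (fun n => wave (n + 1)) c α = 0 := by
    intro c hc hcc α
    refine leafSum_eq_zero (f := fun n => wave (n + 1))
      (fun l hl hb => (wave_eq_zero_iff _).2 ?_) α
    have := hd c (child_ne_root hc) l hl hb
    have := hρ c hc hcc
    omega
  -- on the exceptional branch the outgoing wave controls the incoming one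
  have hE₂ : ∀ α, leafSum T m (fun n => wave (n + 1)) c₂ α = 0 → leafSum T m wave c₂ α = 0 := by
    intro α h
    have hr : ρ c₂ % 3 = 1 ∨ ρ c₂ % 3 = 2 := by omega
    rcases hr with hr | hr
    · refine leafSum_eq_zero (fun l hl hb => (wave_eq_zero_iff _).2 ?_) α
      rw [hd c₂ (child_ne_root hc₂) l hl hb, hr]
    · rw [← h]
      refine leafSum_congr (fun l hl hb => (wave_succ_of_mod_two ?_).symm) α
      rw [hd c₂ (child_ne_root hc₂) l hl hb, hr]
  refine lapMult_eq_of_conditions hT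
    (fun v a b hv ha hb hab l hl hbl => by rw [hd v hv l hl hbl, h3 v a b hv ha hb hab])
    hm hc₀
    ((leafSum T m (fun n => wave (n + 1)) c₂).prod
      (∑ c ∈ (children T m m).erase c₂, leafSum T m wave c)) ?_ ?_
  · rintro ⟨a, b⟩
    obtain ⟨l₂, hl₂, hb₂⟩ := exists_pendant_below hT (child_ne_root hc₂)
    obtain ⟨l₀, hl₀, hb₀⟩ := exists_pendant_below hT (child_ne_root hc₀)
    have w₂ : wave (T.dist c₂ l₂ + 1) ≠ 0 := by
      rw [Ne, wave_eq_zero_iff]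
      have := hd c₂ (child_ne_root hc₂) l₂ hl₂ hb₂
      omega
    have w₀ : wave (T.dist c₀ l₀) ≠ 0 := by
      rw [Ne, wave_eq_zero_iff]
      have := hd c₀ (child_ne_root hc₀) l₀ hl₀ hb₀
      have := hρ c₀ hc₀ hne
      omega
    refine ⟨Pi.single ⟨l₂, hl₂⟩ (a / wave (T.dist c₂ l₂ + 1)) +
      Pi.single ⟨l₀, hl₀⟩ (b / wave (T.dist c₀ l₀)), ?_⟩
    have n₀ : ¬ Below T m c₂ l₀ := fun h => hne (child_below_unique hT hc₀ hc₂ hb₀ h)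
    refine Prod.ext ?_ ?_
    · simp only [LinearMap.prod_apply, Function.prod_apply, map_add, Prod.mk_add_mk, leafSum_single, if_pos hb₂,
        if_neg n₀]
      field_simp
      ring
    · simp only [LinearMap.prod_apply, Function.prod_apply, map_add, Prod.mk_add_mk, LinearMap.sum_apply,
        leafSum_single]
      rw [Finset.sum_eq_zero, Finset.sum_eq_single c₀]
      · rw [if_pos hb₀]
        field_simp
        ring
      · intro c hc hcc
        rw [if_neg]
        intro h
        exact hcc (child_below_unique hT (mem_children.1 (Finset.mem_of_mem_erase hc)) hc₀ h hb₀)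
      · intro h
        exact absurd (Finset.mem_erase.2 ⟨hne, mem_children.2 hc₀⟩) h
      · intro c hc
        rw [if_neg]
        intro h
        exact (Finset.mem_erase.1 hc).1
          (child_below_unique hT (mem_children.1 (Finset.mem_of_mem_erase hc)) hc₂ h hb₂)
  · intro α
    simp only [LinearMap.prod_apply, Function.prod_apply, LinearMap.sum_apply, Prod.mk_eq_zero,
      hU c₀ hc₀ hne, zero_sub, Finset.sum_neg_distrib, neg_eq_zero]
    rw [← Finset.add_sum_erase _ _ (mem_children.2 hc₂)]
    constructor
    · rintro ⟨e1, e2⟩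
      refine ⟨fun c hc => ?_, ?_⟩
      · by_cases hcc : c = c₂
        · rw [hcc, e1]
        · rw [hU c (mem_children.1 hc) hcc]
      · rw [hE₂ α e1, e2, add_zero]
    · rintro ⟨e1, e2⟩
      have e3 := (e1 c₂ (mem_children.2 hc₂)).symm
      rw [hE₂ α e3, zero_add] at e2
      exact ⟨e3, e2⟩

/-- The case of exactly three branches at the root, where the equation at the root itself is
automatic and the only conditions are that the three branches agree on its value. -/
theorem lapMult_of_three_branches [Finite V] {T : SimpleGraph V} (hT : T.IsTree) {m : V}
    {ρ : V → ℕ}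
    (h1 : ∀ l, l ≠ m → IsPendant T l → ρ l % 3 = 0)
    (h2 : ∀ v c, v ≠ m → IsChild T m v c → ρ v % 3 = (ρ c + 1) % 3)
    (h3 : ∀ v c₁ c₂, v ≠ m → IsChild T m v c₁ → IsChild T m v c₂ → c₁ ≠ c₂ → ρ v % 3 = 1)
    {c₀ c₁ c₂ : V} (hc₀ : IsChild T m m c₀) (hc₁ : IsChild T m m c₁) (hc₂ : IsChild T m m c₂)
    (h01 : c₀ ≠ c₁) (h02 : c₀ ≠ c₂) (h12 : c₁ ≠ c₂)
    (hall : ∀ c, IsChild T m m c → c = c₀ ∨ c = c₁ ∨ c = c₂)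
    (hρ₀ : ρ c₀ % 3 = 1) (hρ₁ : ρ c₁ % 3 = 2) (hρ₂ : ρ c₂ % 3 = 2) :
    lapMult T 1 = numPendant T - 2 := by
  classical
  let _ := Fintype.ofFinite V
  have hd := residue_eq_dist hT h1 h2
  have hm : ¬ IsPendant T m := fun h => h01 (pendant_unique h hc₀.1 hc₁.1)
  have hE₀ : ∀ α, leafSum T m wave c₀ α = 0 := by
    refine leafSum_eq_zero (fun l hl hb => (wave_eq_zero_iff _).2 ?_)
    rw [hd c₀ (child_ne_root hc₀) l hl hb, hρ₀]
  have hE : ∀ c, IsChild T m m c → ρ c % 3 = 2 → ∀ α,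
      leafSum T m wave c α = leafSum T m (fun n => wave (n + 1)) c α := by
    intro c hc hr
    refine leafSum_congr (fun l hl hb => (wave_succ_of_mod_two ?_).symm)
    rw [hd c (child_ne_root hc) l hl hb, hr]
  have hC : children T m m = {c₀, c₁, c₂} := by
    ext c
    simp only [mem_children, Finset.mem_insert, Finset.mem_singleton]
    refine ⟨hall c, ?_⟩
    rintro (rfl | rfl | rfl) <;> assumption
  refine lapMult_eq_of_conditions hT
    (fun v a b hv ha hb hab l hl hbl => by rw [hd v hv l hl hbl, h3 v a b hv ha hb hab])
    hm hc₀
    ((leafSum T m (fun n => wave (n + 1)) c₀ - leafSum T m (fun n => wave (n + 1)) c₁).prod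
      (leafSum T m (fun n => wave (n + 1)) c₁ - leafSum T m (fun n => wave (n + 1)) c₂)) ?_ ?_
  · rintro ⟨a, b⟩
    obtain ⟨l₂, hl₂, hb₂⟩ := exists_pendant_below hT (child_ne_root hc₂)
    obtain ⟨l₀, hl₀, hb₀⟩ := exists_pendant_below hT (child_ne_root hc₀)
    have w₂ : wave (T.dist c₂ l₂ + 1) ≠ 0 := by
      rw [Ne, wave_eq_zero_iff]
      have := hd c₂ (child_ne_root hc₂) l₂ hl₂ hb₂
      omega
    have w₀ : wave (T.dist c₀ l₀ + 1) ≠ 0 := by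
      rw [Ne, wave_eq_zero_iff]
      have := hd c₀ (child_ne_root hc₀) l₀ hl₀ hb₀
      omega
    refine ⟨Pi.single ⟨l₀, hl₀⟩ (a / wave (T.dist c₀ l₀ + 1)) +
      Pi.single ⟨l₂, hl₂⟩ (-b / wave (T.dist c₂ l₂ + 1)), ?_⟩
    have n₁ : ¬ Below T m c₁ l₀ := fun h => h01 (child_below_unique hT hc₀ hc₁ hb₀ h)
    have n₂ : ¬ Below T m c₂ l₀ := fun h => h02 (child_below_unique hT hc₀ hc₂ hb₀ h)
    have k₁ : ¬ Below T m c₁ l₂ := fun h => h12 (child_below_unique hT hc₁ hc₂ h hb₂)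
    have k₀ : ¬ Below T m c₀ l₂ := fun h => h02 (child_below_unique hT hc₀ hc₂ h hb₂)
    refine Prod.ext ?_ ?_
    · simp only [LinearMap.prod_apply, Function.prod_apply, map_add, Prod.mk_add_mk, LinearMap.sub_apply,
        leafSum_single, if_pos hb₀, if_neg n₁, if_neg k₁, if_neg k₀]
      field_simp
      ring
    · simp only [LinearMap.prod_apply, Function.prod_apply, map_add, Prod.mk_add_mk, LinearMap.sub_apply,
        leafSum_single, if_pos hb₂, if_neg n₁, if_neg n₂, if_neg k₁]
      field_simp
      ring
  · intro α
    rw [hC, Finset.sum_insert (by simp [h01, h02]), Finset.sum_insert (by simp [h12]),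
      Finset.sum_singleton, hE₀, hE c₁ hc₁ hρ₁, hE c₂ hc₂ hρ₂]
    simp only [LinearMap.prod_apply, Function.prod_apply, LinearMap.sub_apply, Prod.mk_eq_zero,
      Finset.forall_mem_insert, Finset.mem_singleton, forall_eq]
    constructor
    · rintro ⟨e1, e2⟩
      refine ⟨⟨trivial, ?_, ?_⟩, ?_⟩ <;> linarith
    · rintro ⟨⟨-, e1, e2⟩, -⟩
      constructor <;> linarith

/-! ### Residues of distances to the leaves in a tree of class `Γ` -/

theorem induce_dist_eq {T : SimpleGraph V} (hT : T.IsTree) {S : Set V}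
    (hS : (T.induce S).Connected) (x y : S) : (T.induce S).dist x y = T.dist x.1 y.1 := by
  obtain ⟨p, hp, hpl⟩ := hS.exists_path_of_dist x y
  obtain ⟨q, hq, hql⟩ := hT.connected.exists_path_of_dist x.1 y.1
  have hp' : (p.map (Embedding.induce (G := T) S).toHom).IsPath :=
    Walk.IsPath.map (Embedding.induce (G := T) S).injective hp
  have h := congrArg (fun p : T.Path x.1 y.1 => p.1.length)
    ((hT.isAcyclic.subsingleton_path x.1 y.1).elim ⟨_, hp'⟩ ⟨_, hq⟩)
  rw [← hpl, ← hql, ← h]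
  exact (Walk.length_map _ _).symm

theorem induce_ncard_neighborSet {T : SimpleGraph V} {S : Set V} {v : V} (hv : v ∈ S)
    (h : ∀ w, T.Adj v w → w ∈ S) :
    ((T.induce S).neighborSet ⟨v, hv⟩).ncard = (T.neighborSet v).ncard := by
  rw [← Set.ncard_image_of_injective _ Subtype.val_injective]
  congr 1
  ext w
  constructor
  · rintro ⟨x, hx, rfl⟩
    exact hx
  · intro hw
    exact ⟨⟨w, h w hw⟩, hw, rfl⟩

theorem three_neighbors [Finite V] {T : SimpleGraph V} {v a b c : V} (ha : T.Adj v a)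
    (hb : T.Adj v b) (hc : T.Adj v c) (hab : a ≠ b) (hac : a ≠ c) (hbc : b ≠ c) :
    3 ≤ (T.neighborSet v).ncard := by
  rw [← Set.ncard_eq_three.2 ⟨a, b, c, hab, hac, hbc, rfl⟩]
  refine Set.ncard_le_ncard ?_ (Set.toFinite _)
  rintro x (rfl | rfl | rfl) <;> assumption

/-- The two ends of a path are at distance one less than the number of vertices: the distance
from one end enumerates the vertices. -/
theorem path_end_dist [Finite V] {G : SimpleGraph V} (hG : G.IsTree)
    (hdeg : ∀ v, (G.neighborSet v).ncard ≤ 2) {a v : V} (ha : IsPendant G a)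
    (hv : IsPendant G v) (hne : v ≠ a) : G.dist a v + 1 = Nat.card V := by
  have hinj : ∀ n x y, G.dist a x = n → G.dist a y = n → x = y := by
    intro n
    induction n with
    | zero =>
      intro x y hx hy
      rw [hG.connected.dist_eq_zero_iff] at hx hy
      rw [← hx, ← hy]
    | succ n ih =>
      intro x y hx hy
      have hxa : x ≠ a := by
        rintro rfl
        simp at hx
      have hya : y ≠ a := by
        rintro rfl
        simp at hy
      obtain ⟨x', hx'⟩ := parent_exists hG hxa
      obtain ⟨y', hy'⟩ := parent_exists hG hya
      have e1 := hx'.2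
      have e2 := hy'.2
      have := ih x' y' (by omega) (by omega)
      subst this
      by_contra hxy
      by_cases h : x' = a
      · subst h
        exact hxy (pendant_unique ha hx'.1 hy'.1)
      · obtain ⟨z, hz⟩ := parent_exists hG h
        have h3 := three_neighbors hx'.1 hy'.1 hz.1.symm hxy
          (by rintro rfl; exact not_isChild_symm hx' hz)
          (by rintro rfl; exact not_isChild_symm hy' hz)
        have := hdeg x'
        omega
  have hdown : ∀ j n x, G.dist a x = n + j → ∃ y, G.dist a y = n := by
    intro j
    induction j with
    | zero => exact fun n x hx => ⟨x, hx⟩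
    | succ j ih =>
      intro n x hx
      obtain ⟨y, hy⟩ := ih (n + 1) x (by omega)
      have hya : y ≠ a := by
        rintro rfl
        simp at hy
      obtain ⟨z, hz⟩ := parent_exists hG hya
      exact ⟨z, by have := hz.2; omega⟩
  have hmax : ∀ x, G.dist a x ≤ G.dist a v := by
    intro x
    by_contra! hlt
    obtain ⟨y, hy⟩ := hdown (G.dist a x - (G.dist a v + 1)) (G.dist a v + 1) x (by omega)
    have hya : y ≠ a := by
      rintro rfl
      simp at hy
    obtain ⟨z, hz⟩ := parent_exists hG hya
    have := hinj _ z v (by have := hz.2; omega) rfl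
    subst this
    exact pendant_no_child hG hne hv hz
  let e : V ≃ Fin (G.dist a v + 1) := Equiv.ofBijective
    (fun x => ⟨G.dist a x, Nat.lt_succ_of_le (hmax x)⟩) (by
      constructor
      · intro x y hxy
        exact hinj _ x y rfl (Fin.mk.inj_iff.1 hxy).symm
      · rintro ⟨n, hn⟩
        obtain ⟨y, hy⟩ := hdown (G.dist a v - n) n v (by omega)
        exact ⟨y, Fin.ext hy⟩)
  rw [Nat.card_congr e, Nat.card_fin]

/-- If `S` can only be left through `a`, then `a` lies between `S` and any outer vertex. -/
theorem dist_through {T : SimpleGraph V} (hT : T.IsTree) {S : Set V} {a m : V}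
    (hcl : ∀ v w, v ∈ S → v ≠ a → T.Adj v w → w ∈ S) (hm : m ∈ S → m = a) {v : V} (hv : v ∈ S) :
    T.dist m v = T.dist m a + T.dist a v := by
  have key : ∀ v (p : T.Walk v m), v ∈ S → T.dist m a + T.dist a v ≤ p.length := by
    intro v p
    induction p with
    | nil =>
      intro h
      have := hm h
      subst this
      simp
    | @cons x y z hxy q ih =>
      intro hx
      by_cases hxa : x = a
      · subst hxa
        have := dist_le (Walk.cons hxy q)
        rw [T.dist_comm] at this
        simpa using this
      · have h1 := ih hm (hcl x y hx hxa hxy)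
        have h2 := hT.connected.dist_triangle (u := a) (v := y) (w := x)
        have h3 := dist_eq_one_iff_adj.2 hxy.symm
        rw [Walk.length_cons]
        omega
  obtain ⟨p, hp⟩ := hT.connected.exists_walk_length_eq_dist v m
  have h1 := key v p hv
  have h2 := hT.connected.dist_triangle (u := m) (v := a) (w := v)
  rw [hp, T.dist_comm (u := v)] at h1
  omega

theorem onPath_parent {T : SimpleGraph V} (hT : T.IsTree) {u m v c : V}
    (hc : IsChild T m v c) (h : OnPath T u m c) :
    OnPath T u m v ∧ T.dist u v = T.dist u c + 1 := by
  have h1 := hT.connected.dist_triangle (u := u) (v := c) (w := v)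
  have h2 := hT.connected.dist_triangle (u := u) (v := v) (w := m)
  have h3 := dist_eq_one_iff_adj.2 hc.1.symm
  have h4 := hc.2
  rw [T.dist_comm, T.dist_comm (u := m)] at h4
  unfold OnPath at *
  omega

/-- In a tree of class `Γ` rooted at the centre `m` of its base tree, the distances from a vertex
`v ≠ m` to the leaves below it share a residue `ρ v` modulo three. It is `d(u j, v)` on the
`j`-th leg and `1 - d(a i, v)` on the `i`-th attached tree, and it is `1` at branchings. -/
theorem exists_residue [Finite V] {T : SimpleGraph V} (hT : T.IsTree) {m : V} {u : Fin 3 → V}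
    {k : ℕ} {a : Fin k → V} {S : Fin k → Set V}
    (hdisj : ∀ j j', j ≠ j' → ∀ v, OnPath T (u j) m v → OnPath T (u j') m v → v = m)
    (ha : ∀ i, ∃ j, OnPath T (u j) m (a i) ∧ T.dist (a i) (u j) % 3 = 1)
    (hSH : ∀ i, S i ∩ {v | ∃ j, OnPath T (u j) m v} = {a i})
    (hSS : ∀ i i', i ≠ i' → ∀ v ∈ S i ∩ S i', v = a i ∧ v = a i')
    (hcov : ∀ v, (∃ j, OnPath T (u j) m v) ∨ ∃ i, v ∈ S i)
    (hedge : ∀ v w, T.Adj v w →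
      ((∃ j, OnPath T (u j) m v) ∧ (∃ j, OnPath T (u j) m w)) ∨ ∃ i, v ∈ S i ∧ w ∈ S i)
    (hatt : ∀ i, NodeAttach T (S i) (a i) ∨ PendantAttach T (S i) (a i)) :
    ∃ ρ : V → ℕ,
      (∀ j v, OnPath T (u j) m v → v ≠ m → ρ v % 3 = T.dist (u j) v % 3) ∧
      (∀ i v, v ∈ S i → v ≠ m → (ρ v + T.dist (a i) v) % 3 = 1) ∧
      (∀ l, l ≠ m → IsPendant T l → ρ l % 3 = 0) ∧
      (∀ v c, v ≠ m → IsChild T m v c → ρ v % 3 = (ρ c + 1) % 3) ∧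
      (∀ v c₁ c₂, v ≠ m → IsChild T m v c₁ → IsChild T m v c₂ → c₁ ≠ c₂ → ρ v % 3 = 1) := by
  have hmH : OnPath T (u 0) m m := by simp [OnPath]
  have hin : ∀ i v, v ∈ S i → (∃ j, OnPath T (u j) m v) → v = a i := by
    intro i v h1 h2
    have : v ∈ S i ∩ {v | ∃ j, OnPath T (u j) m v} := ⟨h1, h2⟩
    rw [hSH i] at this
    exact this
  have haH : ∀ i, ∃ j, OnPath T (u j) m (a i) := fun i => (ha i).imp fun j h => h.1
  have hleg : ∀ j j' v, v ≠ m → OnPath T (u j) m v → OnPath T (u j') m v → j = j' := by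
    intro j j' v hv h1 h2
    by_contra hne
    exact hv (hdisj j j' hne v h1 h2)
  have hcl : ∀ i v w, v ∈ S i → v ≠ a i → T.Adj v w → w ∈ S i := by
    intro i v w hv hva hvw
    rcases hedge v w hvw with ⟨h1, -⟩ | ⟨i', h1, h2⟩
    · exact absurd (hin i v hv h1) hva
    · by_cases hii : i = i'
      · subst hii
        exact h2
      · exact absurd (hSS i i' hii v ⟨hv, h1⟩).1 hva
  have hsep : ∀ i v, v ∈ S i → T.dist m v = T.dist m (a i) + T.dist (a i) v := fun i v hv =>
    dist_through hT (hcl i) (fun h => hin i m h ⟨0, hmH⟩) hv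
  have hρ : ∀ v, ∃ r : ℕ, (∀ j, OnPath T (u j) m v → v ≠ m → r % 3 = T.dist (u j) v % 3) ∧
      (∀ i, v ∈ S i → v ≠ m → (r + T.dist (a i) v) % 3 = 1) := by
    intro v
    by_cases hvH : ∃ j, OnPath T (u j) m v
    · obtain ⟨j, hj⟩ := hvH
      refine ⟨T.dist (u j) v, fun j' hj' hv => ?_, fun i hi hv => ?_⟩
      · rw [hleg j j' v hv hj hj']
      · have hva := hin i v hi ⟨j, hj⟩
        subst hva
        obtain ⟨j', hj', hd⟩ := ha i
        rw [hleg j j' _ hv hj hj', T.dist_comm, hd.symm]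
        simp
    · obtain ⟨i₀, hi₀⟩ := (hcov v).resolve_left hvH
      refine ⟨1 + 2 * T.dist (a i₀) v, fun j hj => absurd ⟨j, hj⟩ hvH, fun i hi hv => ?_⟩
      by_cases hii : i = i₀
      · subst hii
        omega
      · exact absurd (haH i) ((hSS i i₀ hii v ⟨hi, hi₀⟩).1 ▸ hvH)
  choose ρ hρ1 hρ2 using hρ
  have H1 : ∀ l, l ≠ m → IsPendant T l → ρ l % 3 = 0 := by
    intro v hv hp
    by_cases hvH : ∃ j, OnPath T (u j) m v
    · obtain ⟨j, hj⟩ := hvH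
      rw [hρ1 v j hj hv]
      by_cases hvu : v = u j
      · rw [hvu]
        simp
      · obtain ⟨x, hx, hx'⟩ := tree_pred_exists hT hvu
        obtain ⟨y, hy, hy'⟩ := tree_pred_exists hT hv
        have := pendant_unique hp hx hy
        subst this
        have h1 := hT.connected.dist_triangle (u := u j) (v := x) (w := m)
        unfold OnPath at hj
        rw [T.dist_comm (u := m), T.dist_comm (u := m)] at hy'
        omega
    · obtain ⟨i, hi⟩ := (hcov v).resolve_left hvH
      have hva : v ≠ a i := fun h => hvH (h ▸ haH i)
      have hp' : IsPendant (T.induce (S i)) ⟨v, hi⟩ := by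
        unfold IsPendant
        rw [induce_ncard_neighborSet hi fun w => hcl i v w hi hva]
        exact hp
      have e := hρ2 v i hi hv
      have hd : T.dist (a i) v % 3 = 1 := by
        rcases hatt i with ⟨hb, hQ, hN⟩ | ⟨hb, hP, hN⟩
        · have := hN _ hp'
          rwa [induce_dist_eq hT hQ.1.connected] at this
        · have h1 := path_end_dist hP.1 hP.2.1 hN hp' (fun h => hva (congrArg Subtype.val h))
          have h2 := hP.2.2
          rw [induce_dist_eq hT hP.1.connected] at h1
          simp only at h1
          omega
      omega
  have H2 : ∀ v c, v ≠ m → IsChild T m v c → ρ v % 3 = (ρ c + 1) % 3 := by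
    intro v c hv hc
    have hcm := child_ne_root hc
    by_cases hcH : ∃ j, OnPath T (u j) m c
    · obtain ⟨j, hj⟩ := hcH
      obtain ⟨h1, h2⟩ := onPath_parent hT hc hj
      have e1 := hρ1 v j h1 hv
      have e2 := hρ1 c j hj hcm
      omega
    · rcases hedge v c hc.1 with ⟨-, h⟩ | ⟨i, hvi, hci⟩
      · exact absurd h hcH
      · have e1 := hρ2 v i hvi hv
        have e2 := hρ2 c i hci hcm
        have e3 := hsep i v hvi
        have e4 := hsep i c hci
        have e5 := hc.2
        omega
  refine ⟨ρ, fun j v => hρ1 v j, fun i v => hρ2 v i, H1, H2, ?_⟩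
  intro v c₁ c₂ hv hc₁ hc₂ hne
  by_cases hvH : ∃ j, OnPath T (u j) m v
  · -- a vertex of a leg branches only if some tree is attached there
    have hout : ∀ c, IsChild T m v c → (¬ ∃ j, OnPath T (u j) m c) → ρ v % 3 = 1 := by
      intro c hc hcH
      rcases hedge v c hc.1 with ⟨-, h⟩ | ⟨i, hvi, hci⟩
      · exact absurd h hcH
      · have := hρ2 v i hvi hv
        rw [← hin i v hvi hvH] at this
        simpa using this
    by_cases h1 : ∃ j, OnPath T (u j) m c₁
    · by_cases h2 : ∃ j, OnPath T (u j) m c₂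
      · obtain ⟨j₁, hj₁⟩ := h1
        obtain ⟨j₂, hj₂⟩ := h2
        obtain ⟨p₁, q₁⟩ := onPath_parent hT hc₁ hj₁
        obtain ⟨p₂, q₂⟩ := onPath_parent hT hc₂ hj₂
        have := hleg _ _ v hv p₁ p₂
        subst this
        exact absurd (tree_pred_unique hT hc₁.1 hc₂.1 q₁ q₂) hne
      · exact hout c₂ hc₂ h2
    · exact hout c₁ hc₁ h1
  · obtain ⟨i, hi⟩ := (hcov v).resolve_left hvH
    have hva : v ≠ a i := fun h => hvH (h ▸ haH i)
    rcases hatt i with ⟨hb, hQ, hN⟩ | ⟨hb, hP, hN⟩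
    · -- two leaves below `v` through different children are `2 * ρ v` apart modulo three
      have hdesc : ∀ w, w ≠ m → w ∈ S i → w ≠ a i → ∀ l, Below T m w l → l ∈ S i ∧ l ≠ a i := by
        refine leaf_induction (T := T) fun w hwm ih hw hwa l hl => ?_
        by_cases hwl : w = l
        · subst hwl
          exact ⟨hw, hwa⟩
        · obtain ⟨c, hc, hcl'⟩ := exists_child_below hT hl hwl
          have hcS := hcl i w c hw hwa hc.1
          refine ih c hc hcS ?_ l hcl'
          rintro rfl
          have e1 := hsep i w hw
          have e2 := hc.2
          omega
      obtain ⟨l₁, hl₁, hb₁⟩ := exists_pendant_below hT (child_ne_root hc₁)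
      obtain ⟨l₂, hl₂, hb₂⟩ := exists_pendant_below hT (child_ne_root hc₂)
      obtain ⟨b₁, d₁⟩ := below_child hT hc₁ hb₁
      obtain ⟨b₂, d₂⟩ := below_child hT hc₂ hb₂
      obtain ⟨s₁, n₁⟩ := hdesc v hv hi hva l₁ b₁
      obtain ⟨s₂, n₂⟩ := hdesc v hv hi hva l₂ b₂
      have hpend : ∀ l (hs : l ∈ S i), l ≠ a i → IsPendant T l →
          IsPendant (T.induce (S i)) ⟨l, hs⟩ := by
        intro l hs hla hp
        unfold IsPendant
        rw [induce_ncard_neighborSet hs fun w => hcl i l w hs hla]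
        exact hp
      have hll : l₁ ≠ l₂ := by
        rintro rfl
        exact hne (child_below_unique hT hc₁ hc₂ hb₁ hb₂)
      have h2 := hQ.2 _ _ (hpend l₁ s₁ n₁ hl₁) (hpend l₂ s₂ n₂ hl₂)
        (fun h => hll (congrArg Subtype.val h))
      rw [induce_dist_eq hT hQ.1.connected] at h2
      have r₁ := residue_eq_dist hT H1 H2 v hv l₁ hl₁ b₁
      have r₂ := residue_eq_dist hT H1 H2 v hv l₂ hl₂ b₂
      rw [T.dist_comm, T.dist_comm (u := c₁)] at d₁
      rw [T.dist_comm, T.dist_comm (u := c₂)] at d₂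
      have hfar : T.dist l₁ c₂ = T.dist l₁ v + 1 := by
        rcases hT.dist_eq_dist_add_one_of_adj l₁ hc₂.1 with h | h
        · exact absurd (tree_pred_unique hT hc₁.1 hc₂.1 d₁ h) hne
        · exact h
      have hsum := tree_dist_extend hT hc₂.1 hfar d₂
      rw [T.dist_comm] at r₁ r₂
      simp only at h2
      omega
    · obtain ⟨w, hw⟩ := parent_exists hT hv
      have h3 := three_neighbors hc₁.1 hc₂.1 hw.1.symm hne
        (by rintro rfl; exact not_isChild_symm hc₁ hw)
        (by rintro rfl; exact not_isChild_symm hc₂ hw)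
      have h4 := hP.2.1 ⟨v, hi⟩
      rw [induce_ncard_neighborSet hi fun w => hcl i v w hi hva] at h4
      omega

/-- Let `T ∈ Γ` be a tree with `p ≥ 3` pendant vertices. Then the
multiplicity of `1` as an eigenvalue of the Laplacian matrix `L(T)` equals `p - 2`. -/
theorem stmt_1 {V : Type*} [Finite V] (T : SimpleGraph V) (hΓ : InGamma T)
    (p : ℕ) (hp : p = numPendant T) (hp3 : 3 ≤ p) :
    lapMult T 1 = p - 2 := by
  subst hp
  -- the neighbour of `m` on each leg, with its residue, and the remaining children of `m`
  have legs : ∀ {cond : ℕ → ℕ → ℕ → Prop}, InGammaWith T cond → T.IsTree ∧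
      ∃ (m : V) (c : Fin 3 → V) (d : Fin 3 → ℕ) (ρ : V → ℕ),
        cond (d 0) (d 1) (d 2) ∧ Function.Injective c ∧
        (∀ j, IsChild T m m (c j)) ∧ (∀ j, (ρ (c j) + 1) % 3 = d j % 3) ∧
        (∀ x, IsChild T m m x → (∃ j, x = c j) ∨ (ρ x % 3 = 0 ∧ ∃ j, d j % 3 = 1)) ∧
        (∀ l, l ≠ m → IsPendant T l → ρ l % 3 = 0) ∧
        (∀ v c, v ≠ m → IsChild T m v c → ρ v % 3 = (ρ c + 1) % 3) ∧
        (∀ v c₁ c₂, v ≠ m → IsChild T m v c₁ → IsChild T m v c₂ → c₁ ≠ c₂ → ρ v % 3 = 1) := by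
    rintro cond ⟨m, u, k, a, S, hT, -, hum, hdisj, hcond, ha, hSH, hSS, hcov, hedge, hatt⟩
    obtain ⟨ρ, r1, r2, H1, H2, H3⟩ := exists_residue hT hdisj ha hSH hSS hcov hedge hatt
    have hex : ∀ j, ∃ c, T.Adj m c ∧ T.dist (u j) m = T.dist (u j) c + 1 :=
      fun j => tree_pred_exists hT (hum j).symm
    choose c hc hcd using hex
    have hroot : ∀ x, T.Adj m x → T.dist m x = 1 := fun x hx => dist_eq_one_iff_adj.2 hx
    have hcp : ∀ j, OnPath T (u j) m (c j) := by
      intro j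
      unfold OnPath
      rw [hcd j, T.dist_comm (u := c j), hroot _ (hc j)]
    have hch : ∀ j, IsChild T m m (c j) := fun j => ⟨hc j, by rw [hroot _ (hc j)]; simp⟩
    refine ⟨hT, m, c, fun j => T.dist (u j) m, ρ, hcond, ?_, hch, ?_, ?_, H1, H2, H3⟩
    · intro j j' h
      by_contra hne
      exact child_ne_root (hch j) (hdisj j j' hne _ (hcp j) (h ▸ hcp j'))
    · intro j
      have := r1 j (c j) (hcp j) (child_ne_root (hch j))
      have := hcd j
      simp only
      omega
    · intro x hx
      by_cases hxH : ∃ j, OnPath T (u j) m x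
      · obtain ⟨j, hj⟩ := hxH
        exact Or.inl ⟨j, tree_pred_unique hT hx.1 (hc j) (onPath_parent hT hx hj).2 (hcd j)⟩
      · right
        rcases hedge m x hx.1 with ⟨-, h⟩ | ⟨i, hmi, hxi⟩
        · exact absurd h hxH
        · have hma : m = a i := by
            have : m ∈ S i ∩ {v | ∃ j, OnPath T (u j) m v} := ⟨hmi, 0, by simp [OnPath]⟩
            rw [hSH i] at this
            exact this
          have e := r2 i x hxi (child_ne_root hx)
          rw [← hma, hroot x hx.1] at e
          refine ⟨by omega, ?_⟩
          obtain ⟨j, -, hj⟩ := ha i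
          rw [← hma, T.dist_comm] at hj
          exact ⟨j, hj⟩
  rcases hΓ with h | h
  · obtain ⟨hT, m, c, d, ρ, ⟨d0, d1, d2⟩, hinj, hch, hρ, hall, H1, H2, H3⟩ := legs h
    refine lapMult_of_one_exceptional hT H1 H2 H3 (hch 0) (hch 2)
      (fun h => by simpa using hinj h) ?_ ?_
    · have := hρ 2
      omega
    · intro x hx hne
      rcases hall x hx with ⟨j, rfl⟩ | h
      · have := hρ j
        fin_cases j
        · simp only [Fin.zero_eta] at *
          omega
        · simp only [Fin.mk_one] at *
          omega
        · exact absurd rfl hne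
      · exact h.1
  · obtain ⟨hT, m, c, d, ρ, ⟨d0, d1, d2⟩, hinj, hch, hρ, hall, H1, H2, H3⟩ := legs h
    have e0 := hρ 0
    have e1 := hρ 1
    have e2 := hρ 2
    refine lapMult_of_three_branches hT H1 H2 H3 (hch 0) (hch 1) (hch 2)
      (fun h => by simpa using hinj h) (fun h => by simpa using hinj h)
      (fun h => by simpa using hinj h) ?_ (by omega) (by omega) (by omega)
    intro x hx
    rcases hall x hx with ⟨j, rfl⟩ | ⟨-, j, hj⟩
    · fin_cases j <;> simp
    · exfalso
      fin_cases j
      · simp only [Fin.zero_eta] at hj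
        omega
      · simp only [Fin.mk_one] at hj
        omega
      · simp only [Fin.reduceFinMk] at hj
        omega
end

section
/- Let T be a tree with exactly four pendant vertices u1, u2, u3, u4 and exactly two major vertices m1 and m2, formed by joining the paths P_{u1,m1} and P_{u2,m1} at m1, the paths P_{u3,m2} and P_{u4,m2} at m2, and the path P_{m1,m2} between m1 and m2 (so that these five paths are internally disjoint). If m(T,1) ≥ 2, then at least one of the following holds: (1) d(u1,m1) ≡ 1 mod 3 and d(u2,m1) ≡ 1 mod 3; (2) d(u3,m2) ≡ 1 mod 3 and d(u4,m2) ≡ 1 mod 3. -/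
/-!
Along a path whose internal vertices have degree two, a Laplacian eigenvector `x` for the
eigenvalue `1` satisfies `x i + x (i + 2) = x (i + 1)`, and at a pendant vertex the value at
the unique neighbour is `0`. Starting from a pendant vertex with value `a`, the values are
therefore `a, 0, -a, -a, 0, a, …`, and the value at distance `d` vanishes exactly when
`d ≡ 1 (mod 3)` or `a = 0`.

Suppose that neither alternative holds; by symmetry `d(u₁,m₁) ≢ 1` and `d(u₃,m₂) ≢ 1`. Since the
eigenspace has dimension at least two, it contains a nonzero `x` with `x u₂ = 0`. Then `x`
vanishes on the leg of `u₂`, in particular at `m₁`, hence on the leg of `u₁` because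
`d(u₁,m₁) ≢ 1`. The equation at `m₁`, which has degree three, gives a second zero next to `m₁` on
the path to `m₂`, so `x` vanishes on this path. In the same way it vanishes on the leg of `u₃`,
and then, by the equation at `m₂`, on the leg of `u₄`. This contradicts `x ≠ 0`
(`eigenvector_eq_zero`).

That `m₁` and `m₂` have degree exactly three follows from counting edges (`major_degrees`), and
the five paths cover the tree because their union is closed under adjacency.
-/

open SimpleGraph Matrix

variable {V : Type*}

/-! ### Sequences with `y i + y (i + 2) = y (i + 1)` -/

lemma seq_zero (y : ℕ → ℝ) (n : ℕ) (h : ∀ i, i + 2 ≤ n → y i + y (i + 2) = y (i + 1))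
    (h0 : y 0 = 0) (h1 : y 1 = 0) : ∀ i, i ≤ n → y i = 0 := by
  have key : ∀ i, i + 1 ≤ n → y i = 0 ∧ y (i + 1) = 0 := by
    intro i
    induction i with
    | zero => intro _; exact ⟨h0, h1⟩
    | succ k ih =>
      intro hk
      obtain ⟨a, b⟩ := ih (by omega)
      have := h k (by omega)
      exact ⟨b, by linarith⟩
  intro i hi
  rcases i with _ | i
  · exact h0
  · exact (key i hi).2

/-- A solution starting with `a, 0` is `a, 0, -a, -a, 0, a, …`, so it has a zero at an index
`n ≢ 1 (mod 3)` only if `a = 0`. -/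
lemma seq_start_zero (y : ℕ → ℝ) (n : ℕ) (h : ∀ i, i + 2 ≤ n → y i + y (i + 2) = y (i + 1))
    (h1 : y 1 = 0) (hn : y n = 0) (hmod : n % 3 ≠ 1) : y 0 = 0 := by
  have key : ∀ i, i + 1 ≤ n →
      (i % 3 = 0 → (y i = y 0 ∨ y i = - y 0) ∧ y (i + 1) = 0) ∧
      (i % 3 = 1 → (y (i + 1) = y 0 ∨ y (i + 1) = - y 0) ∧ y i = 0) ∧
      (i % 3 = 2 → (y i = y 0 ∨ y i = - y 0) ∧ y (i + 1) = y i) := by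
    intro i
    induction i with
    | zero => intro _; simp [h1]
    | succ k ih =>
      intro hk
      obtain ⟨a, b, c⟩ := ih (by omega)
      have e := h k (by omega)
      refine ⟨fun hm => ?_, fun hm => ?_, fun hm => ?_⟩
      · obtain ⟨c1, c2⟩ := c (by omega)
        refine ⟨by rwa [c2], ?_⟩
        show y (k + 2) = 0
        linarith
      · obtain ⟨c1, c2⟩ := a (by omega)
        refine ⟨?_, c2⟩
        show y (k + 2) = y 0 ∨ y (k + 2) = - y 0
        rcases c1 with c1 | c1
        · right; linarith
        · left; linarith
      · obtain ⟨c1, c2⟩ := b (by omega)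
        refine ⟨c1, ?_⟩
        show y (k + 2) = y (k + 1)
        linarith
  rcases n with _ | k
  · exact hn
  · obtain ⟨a, b, c⟩ := key k le_rfl
    have : k % 3 = 1 ∨ k % 3 = 2 := by omega
    rcases this with hk | hk
    · obtain ⟨c1, c2⟩ := b hk
      rcases c1 with c1 | c1 <;> linarith
    · obtain ⟨c1, c2⟩ := c hk
      rcases c1 with c1 | c1 <;> linarith

lemma rec_reverse (y : ℕ → ℝ) (n : ℕ) (h : ∀ i, i + 2 ≤ n → y i + y (i + 2) = y (i + 1)) :
    ∀ i, i + 2 ≤ n → y (n - i) + y (n - (i + 2)) = y (n - (i + 1)) := by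
  intro i hi
  have := h (n - (i + 2)) (by omega)
  rw [show n - (i + 2) + 2 = n - i by omega, show n - (i + 2) + 1 = n - (i + 1) by omega] at this
  linarith

lemma seq_zero_of_end (y : ℕ → ℝ) (n : ℕ)
    (h : ∀ i, i + 2 ≤ n → y i + y (i + 2) = y (i + 1))
    (h0 : y n = 0) (h1 : y (n - 1) = 0) : ∀ i, i ≤ n → y i = 0 := by
  intro i hi
  have := seq_zero (fun i => y (n - i)) n (rec_reverse y n h) (by simpa using h0) h1 (n - i)
    (by omega)
  simpa [show n - (n - i) = i by omega] using this

lemma seq_end_zero (y : ℕ → ℝ) (n : ℕ)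
    (h : ∀ i, i + 2 ≤ n → y i + y (i + 2) = y (i + 1))
    (h0 : y 0 = 0) (h1 : y (n - 1) = 0) (hmod : n % 3 ≠ 1) : ∀ i, i ≤ n → y i = 0 := by
  refine seq_zero_of_end y n h ?_ h1
  simpa using seq_start_zero (fun i => y (n - i)) n (rec_reverse y n h) h1 (by simpa using h0) hmod

/-! ### The eigenvector equation and degrees -/

/-- The equation `L x = x`, read off vertex by vertex; the sum is over the neighbours of `v`. -/
def LapEq (T : SimpleGraph V) (x : V → ℝ) : Prop :=
  ∀ v, ((T.neighborSet v).ncard : ℝ) * x v - ∑ᶠ w ∈ T.neighborSet v, x w = x v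

lemma ncard_neighborSet_eq_degree [Fintype V] (T : SimpleGraph V) [DecidableRel T.Adj] (v : V) :
    (T.neighborSet v).ncard = T.degree v := by
  rw [Set.ncard_eq_toFinset_card']
  rfl

lemma lapEq_of_mem_eigenspace [Fintype V] [DecidableEq V] (T : SimpleGraph V) (x : V → ℝ)
    (hx : x ∈ Module.End.eigenspace (Matrix.toLin' (lapMat T)) 1) : LapEq T x := by
  classical
  rw [Module.End.mem_eigenspace_iff] at hx
  intro v
  have h := congrFun hx v
  rw [Matrix.toLin'_apply] at h
  have e : lapMat T = T.lapMatrix ℝ := by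
    unfold lapMat
    congr!
  rw [e, SimpleGraph.lapMatrix_mulVec_apply] at h
  rw [ncard_neighborSet_eq_degree]
  have hs : ∑ᶠ w ∈ T.neighborSet v, x w = ∑ w ∈ T.neighborFinset v, x w := by
    rw [← finsum_mem_coe_finset]
    simp only [SimpleGraph.coe_neighborFinset]
  rw [hs]
  simpa using h

lemma LapEq.one {T : SimpleGraph V} {x : V → ℝ} (h : LapEq T x) {v a : V}
    (hN : T.neighborSet v = {a}) : x a = 0 := by
  have := h v
  rw [hN, finsum_mem_singleton, Set.ncard_singleton] at this
  push_cast at this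
  linarith

lemma LapEq.two {T : SimpleGraph V} {x : V → ℝ} (h : LapEq T x) {v a b : V}
    (hN : T.neighborSet v = {a, b}) (hab : a ≠ b) : x a + x b = x v := by
  have := h v
  rw [hN, finsum_mem_pair hab, Set.ncard_pair hab] at this
  push_cast at this
  linarith

lemma LapEq.three {T : SimpleGraph V} {x : V → ℝ} (h : LapEq T x) {v a b c : V}
    (hN : T.neighborSet v = {a, b, c}) (hab : a ≠ b) (hac : a ≠ c) (hbc : b ≠ c) :
    x a + x b + x c = 2 * x v := by
  have := h v
  rw [hN, finsum_mem_insert _ (by simp [hab, hac]) (Set.toFinite _), finsum_mem_pair hbc,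
    Set.ncard_eq_three.mpr ⟨a, b, c, hab, hac, hbc, rfl⟩] at this
  push_cast at this
  linarith

/-- Counting edges: the sum of `deg v - 2` over a tree is `-2`, which forces the two major
vertices to have degree three when there are four pendant vertices. -/
lemma major_degrees [Finite V] (T : SimpleGraph V) (hT : T.IsTree)
    (u₁ u₂ u₃ u₄ m₁ m₂ : V)
    (hdist : List.Pairwise (· ≠ ·) [u₁, u₂, u₃, u₄]) (hmm : m₁ ≠ m₂)
    (hpend : ∀ w : V, IsPendant T w ↔ w ∈ ({u₁, u₂, u₃, u₄} : Set V))
    (hmaj : ∀ w : V, IsMajor T w ↔ w ∈ ({m₁, m₂} : Set V)) :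
    (T.neighborSet m₁).ncard = 3 ∧ (T.neighborSet m₂).ncard = 3 := by
  classical
  have := Fintype.ofFinite V
  have hne : ∀ u m, IsPendant T u → IsMajor T m → u ≠ m := by
    rintro u m hu hm rfl
    unfold IsPendant at hu
    unfold IsMajor at hm
    omega
  have p1 : IsPendant T u₁ := (hpend _).2 (by simp)
  have p2 : IsPendant T u₂ := (hpend _).2 (by simp)
  have p3 : IsPendant T u₃ := (hpend _).2 (by simp)
  have p4 : IsPendant T u₄ := (hpend _).2 (by simp)
  have M1 : IsMajor T m₁ := (hmaj _).2 (by simp)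
  have M2 : IsMajor T m₂ := (hmaj _).2 (by simp)
  have hnt : Nontrivial V := ⟨m₁, m₂, hmm⟩
  have hsum := T.sum_degrees_eq_twice_card_edges
  have hcard := hT.card_edgeFinset
  have htot : ∑ v, ((T.degree v : ℤ) - 2) = -2 := by
    rw [Finset.sum_sub_distrib, ← Nat.cast_sum, hsum]
    simp only [Finset.sum_const, Finset.card_univ, nsmul_eq_mul]
    push_cast
    have : (T.edgeFinset.card : ℤ) + 1 = Fintype.card V := by exact_mod_cast hcard
    linarith
  have hsub : ∑ v ∈ ({u₁, u₂, u₃, u₄, m₁, m₂} : Finset V), ((T.degree v : ℤ) - 2) = -2 := by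
    rw [← htot]
    refine Finset.sum_subset (Finset.subset_univ _) ?_
    intro v _ hv
    simp only [Finset.mem_insert, Finset.mem_singleton, not_or] at hv
    have hp : ¬ IsPendant T v := by
      rw [hpend]; simp; tauto
    have hm : ¬ IsMajor T v := by
      rw [hmaj]; simp; tauto
    unfold IsPendant at hp
    unfold IsMajor at hm
    rw [ncard_neighborSet_eq_degree] at hp hm
    have := hT.connected.preconnected.degree_pos_of_nontrivial v
    omega
  simp only [List.pairwise_cons, List.mem_cons, List.not_mem_nil, or_false, forall_eq_or_imp,
    forall_eq, List.Pairwise.nil, and_true, IsEmpty.forall_iff, implies_true] at hdist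
  obtain ⟨⟨d12, d13, d14⟩, ⟨d23, d24⟩, d34⟩ := hdist
  rw [Finset.sum_insert (by simp [d12, d13, d14, hne _ _ p1 M1, hne _ _ p1 M2]),
    Finset.sum_insert (by simp [d23, d24, hne _ _ p2 M1, hne _ _ p2 M2]),
    Finset.sum_insert (by simp [d34, hne _ _ p3 M1, hne _ _ p3 M2]),
    Finset.sum_insert (by simp [hne _ _ p4 M1, hne _ _ p4 M2]),
    Finset.sum_pair hmm] at hsub
  unfold IsPendant at p1 p2 p3 p4
  unfold IsMajor at M1 M2
  rw [ncard_neighborSet_eq_degree] at p1 p2 p3 p4 M1 M2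
  rw [ncard_neighborSet_eq_degree, ncard_neighborSet_eq_degree]
  omega

/-! ### Geodesics -/

/-- `f 0, …, f n` is a geodesic from `a` to `b` (so `n = dist a b`) whose internal vertices have
no neighbours besides their two neighbours on the geodesic. -/
structure Seg (T : SimpleGraph V) (a b : V) (n : ℕ) (f : ℕ → V) : Prop where
  zero : f 0 = a
  last : f n = b
  len : T.dist a b = n
  adj : ∀ i, i < n → T.Adj (f i) (f (i + 1))
  dist_left : ∀ i, i ≤ n → T.dist a (f i) = i
  dist_right : ∀ i, i ≤ n → T.dist (f i) b = n - i
  nbr : ∀ i, i + 2 ≤ n → T.neighborSet (f (i + 1)) = {f i, f (i + 2)}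

lemma exists_seg [Finite V] {T : SimpleGraph V} (hT : T.Connected) {m₁ m₂ : V}
    (hmaj : ∀ w : V, IsMajor T w ↔ w ∈ ({m₁, m₂} : Set V)) (a b : V)
    (h : ∀ v, 0 < T.dist a v → 0 < T.dist v b → T.dist a v + T.dist v b = T.dist a b →
      v ≠ m₁ ∧ v ≠ m₂) :
    ∃ f, Seg T a b (T.dist a b) f := by
  obtain ⟨p, hp⟩ := hT.exists_walk_length_eq_dist a b
  have hd : ∀ i, i ≤ T.dist a b →
      T.dist a (p.getVert i) = i ∧ T.dist (p.getVert i) b = T.dist a b - i := by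
    intro i hi
    have h1 := SimpleGraph.dist_le (p.take i)
    have h2 := SimpleGraph.dist_le (p.drop i)
    have h3 := hT.dist_triangle (u := a) (v := p.getVert i) (w := b)
    rw [SimpleGraph.Walk.take_length] at h1
    rw [SimpleGraph.Walk.drop_length] at h2
    omega
  have hadj : ∀ i, i < T.dist a b → T.Adj (p.getVert i) (p.getVert (i + 1)) := by
    intro i hi
    exact p.adj_getVert_succ (by omega)
  refine ⟨p.getVert, ⟨p.getVert_zero, ?_, rfl, hadj, fun i hi => (hd i hi).1,
    fun i hi => (hd i hi).2, ?_⟩⟩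
  · rw [← hp]; exact p.getVert_length
  · intro i hi
    obtain ⟨e1, e2⟩ := hd (i + 1) (by omega)
    have hv := h (p.getVert (i + 1)) (by omega) (by omega) (by omega)
    have hnm : ¬ IsMajor T (p.getVert (i + 1)) := by
      rw [hmaj]; simp [hv.1, hv.2]
    unfold IsMajor at hnm
    have hne : p.getVert i ≠ p.getVert (i + 2) := by
      intro he
      have h1 := (hd i (by omega)).1
      have h2 := (hd (i + 2) (by omega)).1
      rw [he] at h1
      omega
    symm
    refine Set.eq_of_subset_of_ncard_le ?_ ?_ (Set.toFinite _)
    · rintro w (rfl | rfl)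
      · exact (hadj i (by omega)).symm
      · exact hadj (i + 1) (by omega)
    · rw [Set.ncard_pair hne]
      omega

namespace Seg

variable {T : SimpleGraph V} {a b : V} {n : ℕ} {f : ℕ → V}

lemma recurrence (s : Seg T a b n f) {x : V → ℝ} (hx : LapEq T x) :
    ∀ i, i + 2 ≤ n → x (f i) + x (f (i + 2)) = x (f (i + 1)) := by
  intro i hi
  refine hx.two (s.nbr i hi) ?_
  intro he
  have h1 := s.dist_left i (by omega)
  have h2 := s.dist_left (i + 2) hi
  rw [he] at h1
  omega

lemma nbr_last (s : Seg T a b n f) (hn : 0 < n) (hb : IsPendant T b) :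
    T.neighborSet b = {f (n - 1)} := by
  obtain ⟨c, hc⟩ := Set.ncard_eq_one.mp hb
  have h := s.adj (n - 1) (by omega)
  rw [show n - 1 + 1 = n by omega, s.last] at h
  have h2 : f (n - 1) ∈ T.neighborSet b := h.symm
  rw [hc] at h2 ⊢
  rw [Set.mem_singleton_iff.mp h2]

lemma zero_before_last (s : Seg T a b n f) (hn : 0 < n) (hb : IsPendant T b) {x : V → ℝ}
    (hx : LapEq T x) : x (f (n - 1)) = 0 :=
  hx.one (s.nbr_last hn hb)

lemma first_ne {b' : V} {n' : ℕ} {f' : ℕ → V} (hT : T.Connected) (s : Seg T a b n f)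
    (s' : Seg T a b' n' f') (hn : 0 < n) (hn' : 0 < n') (h : OnPath T b b' a) :
    f 1 ≠ f' 1 := by
  intro he
  have h1 := s.dist_right 1 hn
  have h2 := s'.dist_right 1 hn'
  have h3 := hT.dist_triangle (u := b) (v := f 1) (w := b')
  have h4 := s.len
  have h5 := s'.len
  unfold OnPath at h
  rw [T.dist_comm] at h1 h4
  rw [← he] at h2
  omega

/-- A neighbour of an internal vertex, or of a pendant endpoint, is on the geodesic. -/
lemma closed (s : Seg T a b n f) (hn : 0 < n) {i : ℕ} (hi : i ≤ n) (h0 : 0 < i)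
    (hb : i = n → IsPendant T b) {w : V} (hw : T.Adj (f i) w) : ∃ j ≤ n, w = f j := by
  rcases hi.lt_or_eq with hlt | rfl
  · obtain ⟨k, rfl⟩ : ∃ k, i = k + 1 := ⟨i - 1, by omega⟩
    have : w ∈ T.neighborSet (f (k + 1)) := hw
    rw [s.nbr k (by omega)] at this
    rcases this with rfl | rfl
    · exact ⟨k, by omega, rfl⟩
    · exact ⟨k + 2, by omega, rfl⟩
  · rw [s.last] at hw
    have : w ∈ T.neighborSet b := hw
    rw [s.nbr_last hn (hb rfl)] at this
    exact ⟨i - 1, by omega, this⟩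

end Seg

lemma nbr_three [Finite V] {T : SimpleGraph V} {m a b c : V}
    (hm : (T.neighborSet m).ncard = 3) (ha : T.Adj m a) (hb : T.Adj m b) (hc : T.Adj m c)
    (hab : a ≠ b) (hac : a ≠ c) (hbc : b ≠ c) : T.neighborSet m = {a, b, c} := by
  symm
  refine Set.eq_of_subset_of_ncard_le ?_ ?_ (Set.toFinite _)
  · rintro w (rfl | rfl | rfl) <;> assumption
  · rw [Set.ncard_eq_three.mpr ⟨a, b, c, hab, hac, hbc, rfl⟩, hm]

lemma forall_of_closed {T : SimpleGraph V} (hT : T.Connected) (S : V → Prop) (v₀ : V)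
    (h₀ : S v₀) (h : ∀ v w, S v → T.Adj v w → S w) (v : V) : S v := by
  obtain ⟨p⟩ := hT.preconnected v₀ v
  induction p with
  | nil => exact h₀
  | cons hadj _ ih => exact ih (h _ _ h₀ hadj)

/-! ### The eigenvector vanishes -/

/-- An eigenvector for the eigenvalue `1` that vanishes at `u₂` is zero, provided that
`d(u₁,m₁)` and `d(u₃,m₂)` are not `1` modulo `3`. -/
lemma eigenvector_eq_zero [Finite V] (T : SimpleGraph V) (hT : T.IsTree)
    (u₁ u₂ u₃ u₄ m₁ m₂ : V)
    (hdist : List.Pairwise (· ≠ ·) [u₁, u₂, u₃, u₄]) (hmm : m₁ ≠ m₂)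
    (hpend : ∀ w : V, IsPendant T w ↔ w ∈ ({u₁, u₂, u₃, u₄} : Set V))
    (hmaj : ∀ w : V, IsMajor T w ↔ w ∈ ({m₁, m₂} : Set V))
    (h₁ : OnPath T u₁ u₂ m₁) (h₂ : OnPath T u₃ u₄ m₂)
    (h₃ : OnPath T u₁ m₂ m₁) (h₄ : OnPath T u₂ m₂ m₁)
    (h₅ : OnPath T u₃ m₁ m₂) (h₆ : OnPath T u₄ m₁ m₂)
    (d₁ : T.dist u₁ m₁ % 3 ≠ 1) (d₃ : T.dist u₃ m₂ % 3 ≠ 1)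
    (x : V → ℝ) (hx : LapEq T x) (hx2 : x u₂ = 0) : x = 0 := by
  have hc := hT.connected
  obtain ⟨D1, D2⟩ := major_degrees T hT u₁ u₂ u₃ u₄ m₁ m₂ hdist hmm hpend hmaj
  have hne : ∀ u m, IsPendant T u → IsMajor T m → 0 < T.dist m u := by
    intro u m hu hm
    apply hc.pos_dist_of_ne
    rintro rfl
    unfold IsPendant at hu
    unfold IsMajor at hm
    omega
  have p1 : IsPendant T u₁ := (hpend _).2 (by simp)
  have p2 : IsPendant T u₂ := (hpend _).2 (by simp)
  have p3 : IsPendant T u₃ := (hpend _).2 (by simp)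
  have p4 : IsPendant T u₄ := (hpend _).2 (by simp)
  have M1 : IsMajor T m₁ := (hmaj _).2 (by simp)
  have M2 : IsMajor T m₂ := (hmaj _).2 (by simp)
  have leg1 : ∀ u, OnPath T u m₂ m₁ → ∃ f, Seg T m₁ u (T.dist m₁ u) f := by
    intro u hu
    refine exists_seg hc hmaj _ _ ?_
    unfold OnPath at hu
    intro v hv1 hv2 hv3
    constructor
    · rintro rfl
      simp at hv1
    · rintro rfl
      rw [T.dist_comm (u := u) (v := v), T.dist_comm (u := u) (v := m₁)] at hu
      omega
  have leg2 : ∀ u, OnPath T u m₁ m₂ → ∃ f, Seg T m₂ u (T.dist m₂ u) f := by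
    intro u hu
    refine exists_seg hc hmaj _ _ ?_
    unfold OnPath at hu
    intro v hv1 hv2 hv3
    constructor
    · rintro rfl
      rw [T.dist_comm (u := u) (v := v), T.dist_comm (u := u) (v := m₂)] at hu
      omega
    · rintro rfl
      simp at hv1
  obtain ⟨f1, s1⟩ := leg1 u₁ h₃
  obtain ⟨f2, s2⟩ := leg1 u₂ h₄
  obtain ⟨f3, s3⟩ := leg2 u₃ h₅
  obtain ⟨f4, s4⟩ := leg2 u₄ h₆
  have hmid : ∀ v, 0 < T.dist m₁ v → 0 < T.dist v m₂ → v ≠ m₁ ∧ v ≠ m₂ := by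
    intro v hv1 hv2
    constructor
    · rintro rfl
      simp at hv1
    · rintro rfl
      simp at hv2
  obtain ⟨g, sg⟩ := exists_seg hc hmaj m₁ m₂ fun v hv1 hv2 _ => hmid v hv1 hv2
  have n1 := hne _ _ p1 M1
  have n2 := hne _ _ p2 M1
  have n3 := hne _ _ p3 M2
  have n4 := hne _ _ p4 M2
  have ng := hc.pos_dist_of_ne hmm
  rw [T.dist_comm] at d₁ d₃
  generalize T.dist m₁ u₁ = k1 at s1 n1 d₁
  generalize T.dist m₁ u₂ = k2 at s2 n2
  generalize T.dist m₂ u₃ = k3 at s3 n3 d₃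
  generalize T.dist m₂ u₄ = k4 at s4 n4
  generalize hkg : T.dist m₁ m₂ = kg at sg ng
  -- the neighbours of `m₁`
  have a1 := s1.adj 0 n1
  have a2 := s2.adj 0 n2
  have ag := sg.adj 0 ng
  rw [s1.zero] at a1
  rw [s2.zero] at a2
  rw [sg.zero] at ag
  have e12 := s1.first_ne hc s2 n1 n2 h₁
  have e1g := s1.first_ne hc sg n1 ng h₃
  have e2g := s2.first_ne hc sg n2 ng h₄
  have N1 : T.neighborSet m₁ = {f1 1, f2 1, g 1} := nbr_three D1 a1 a2 ag e12 e1g e2g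
  -- the neighbours of `m₂`
  have a3 := s3.adj 0 n3
  have a4 := s4.adj 0 n4
  rw [s3.zero] at a3
  rw [s4.zero] at a4
  have ag' := sg.adj (kg - 1) (by omega)
  rw [show kg - 1 + 1 = kg by omega, sg.last] at ag'
  have e34 := s3.first_ne hc s4 n3 n4 h₂
  have eg : ∀ u n f, Seg T m₂ u n f → 0 < n → OnPath T u m₁ m₂ → f 1 ≠ g (kg - 1) := by
    intro u n f s hn hu he
    have t1 := s.dist_right 1 hn
    have t2 := sg.dist_left (kg - 1) (by omega)
    have t3 := hc.dist_triangle (u := u) (v := f 1) (w := m₁)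
    have t4 := s.len
    unfold OnPath at hu
    rw [T.dist_comm] at t1 t2 t4
    rw [T.dist_comm (u := m₂) (v := m₁)] at hu
    rw [← he] at t2
    omega
  have N2 : T.neighborSet m₂ = {f3 1, f4 1, g (kg - 1)} :=
    nbr_three D2 a3 a4 ag'.symm e34 (eg _ _ _ s3 n3 h₅) (eg _ _ _ s4 n4 h₆)
  -- vanishing on the five paths
  have z2 := seq_zero_of_end (fun i => x (f2 i)) k2 (s2.recurrence hx)
    (by simpa [s2.last] using hx2) (s2.zero_before_last n2 p2 hx)
  have zm1 : x m₁ = 0 := by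
    have := z2 0 (by omega)
    simpa [s2.zero] using this
  have z1 := seq_end_zero (fun i => x (f1 i)) k1 (s1.recurrence hx)
    (by simpa [s1.zero] using zm1) (s1.zero_before_last n1 p1 hx) d₁
  have q1 := hx.three N1 e12 e1g e2g
  have zg := seq_zero (fun i => x (g i)) kg (sg.recurrence hx)
    (by simpa [sg.zero] using zm1)
    (by have r1 := z1 1 n1
        have r2 := z2 1 n2
        linarith)
  have zm2 : x m₂ = 0 := by
    have := zg kg le_rfl
    simpa [sg.last] using this
  have z3 := seq_end_zero (fun i => x (f3 i)) k3 (s3.recurrence hx)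
    (by simpa [s3.zero] using zm2) (s3.zero_before_last n3 p3 hx) d₃
  have q2 := hx.three N2 e34 (eg _ _ _ s3 n3 h₅) (eg _ _ _ s4 n4 h₆)
  have z4 := seq_zero (fun i => x (f4 i)) k4 (s4.recurrence hx)
    (by simpa [s4.zero] using zm2)
    (by have r1 := z3 1 n3
        have r2 := zg (kg - 1) (by omega)
        linarith)
  -- the five paths cover the tree
  let S : V → Prop := fun v => (∃ j ≤ k1, v = f1 j) ∨ (∃ j ≤ k2, v = f2 j) ∨
    (∃ j ≤ k3, v = f3 j) ∨ (∃ j ≤ k4, v = f4 j) ∨ (∃ j ≤ kg, v = g j)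
  have cm1 : ∀ w, T.Adj m₁ w → S w := by
    intro w hw
    have hw' : w ∈ T.neighborSet m₁ := hw
    rw [N1] at hw'
    rcases hw' with rfl | rfl | rfl
    · exact Or.inl ⟨1, n1, rfl⟩
    · exact Or.inr (Or.inl ⟨1, n2, rfl⟩)
    · exact Or.inr (Or.inr (Or.inr (Or.inr ⟨1, ng, rfl⟩)))
  have cm2 : ∀ w, T.Adj m₂ w → S w := by
    intro w hw
    have hw' : w ∈ T.neighborSet m₂ := hw
    rw [N2] at hw'
    rcases hw' with rfl | rfl | rfl
    · exact Or.inr (Or.inr (Or.inl ⟨1, n3, rfl⟩))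
    · exact Or.inr (Or.inr (Or.inr (Or.inl ⟨1, n4, rfl⟩)))
    · exact Or.inr (Or.inr (Or.inr (Or.inr ⟨kg - 1, by omega, rfl⟩)))
  have hS : ∀ v, S v := by
    refine forall_of_closed hc S (f1 0) (Or.inl ⟨0, by omega, rfl⟩) ?_
    rintro v w (⟨j, hj, rfl⟩ | ⟨j, hj, rfl⟩ | ⟨j, hj, rfl⟩ | ⟨j, hj, rfl⟩ | ⟨j, hj, rfl⟩) hw <;>
      rcases Nat.eq_zero_or_pos j with rfl | h0
    · rw [s1.zero] at hw
      exact cm1 w hw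
    · exact Or.inl (s1.closed n1 hj h0 (fun _ => p1) hw)
    · rw [s2.zero] at hw
      exact cm1 w hw
    · exact Or.inr (Or.inl (s2.closed n2 hj h0 (fun _ => p2) hw))
    · rw [s3.zero] at hw
      exact cm2 w hw
    · exact Or.inr (Or.inr (Or.inl (s3.closed n3 hj h0 (fun _ => p3) hw)))
    · rw [s4.zero] at hw
      exact cm2 w hw
    · exact Or.inr (Or.inr (Or.inr (Or.inl (s4.closed n4 hj h0 (fun _ => p4) hw))))
    · rw [sg.zero] at hw
      exact cm1 w hw
    · by_cases hjk : j = kg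
      · rw [hjk, sg.last] at hw
        exact cm2 w hw
      · exact Or.inr (Or.inr (Or.inr (Or.inr
          (sg.closed ng hj h0 (fun h => absurd h hjk) hw))))
  funext v
  rcases hS v with ⟨j, hj, rfl⟩ | ⟨j, hj, rfl⟩ | ⟨j, hj, rfl⟩ | ⟨j, hj, rfl⟩ | ⟨j, hj, rfl⟩
  · exact z1 j hj
  · exact z2 j hj
  · exact z3 j hj
  · exact z4 j hj
  · exact zg j hj

/-- A one-dimensional condition cannot cut an eigenspace of dimension at least two down to zero. -/
lemma exists_eigenvector [Finite V] (T : SimpleGraph V) (hmult : 2 ≤ lapMult T 1) (u : V) :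
    ∃ x : V → ℝ, LapEq T x ∧ x u = 0 ∧ x ≠ 0 := by
  let _ := Fintype.ofFinite V
  let _ := Classical.decEq V
  have h2 : 2 ≤ Module.finrank ℝ (Module.End.eigenspace (Matrix.toLin' (lapMat T)) 1) := hmult
  let φ : Module.End.eigenspace (Matrix.toLin' (lapMat T)) (1 : ℝ) →ₗ[ℝ] ℝ :=
    (LinearMap.proj u).comp (Submodule.subtype _)
  have hk : LinearMap.ker φ ≠ ⊥ := by
    apply LinearMap.ker_ne_bot_of_finrank_lt
    rw [Module.finrank_self]
    omega
  obtain ⟨x, hxk, hx0⟩ := Submodule.exists_mem_ne_zero_of_ne_bot hk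
  exact ⟨x, lapEq_of_mem_eigenspace T x x.2, hxk, fun h => hx0 (Subtype.ext h)⟩

lemma OnPath.symm {T : SimpleGraph V} {u w v : V} (h : OnPath T u w v) : OnPath T w u v := by
  unfold OnPath at *
  rw [T.dist_comm (u := w) (v := v), T.dist_comm (u := v) (v := u), T.dist_comm (u := w) (v := u)]
  omega

/-- Let `T` be a tree with exactly four pendant vertices
`u₁, u₂, u₃, u₄` and exactly two major vertices `m₁` and `m₂`, formed by joining the
paths `P_{u₁,m₁}` and `P_{u₂,m₁}` at `m₁`, the paths `P_{u₃,m₂}` and `P_{u₄,m₂}` at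
`m₂`, and the path `P_{m₁,m₂}` between `m₁` and `m₂` (so that these five paths are
internally disjoint).  If `m(T,1) ≥ 2`, then `d(u₁,m₁) ≡ d(u₂,m₁) ≡ 1 (mod 3)` or
`d(u₃,m₂) ≡ d(u₄,m₂) ≡ 1 (mod 3)`. -/
theorem stmt_5 {V : Type*} [Finite V] (T : SimpleGraph V) (hT : T.IsTree)
    (u₁ u₂ u₃ u₄ m₁ m₂ : V)
    (hdist : List.Pairwise (· ≠ ·) [u₁, u₂, u₃, u₄]) (hmm : m₁ ≠ m₂)
    (hpend : ∀ w : V, IsPendant T w ↔ w ∈ ({u₁, u₂, u₃, u₄} : Set V))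
    (hmaj : ∀ w : V, IsMajor T w ↔ w ∈ ({m₁, m₂} : Set V))
    (h₁ : OnPath T u₁ u₂ m₁) (h₂ : OnPath T u₃ u₄ m₂)
    (h₃ : OnPath T u₁ m₂ m₁) (h₄ : OnPath T u₂ m₂ m₁)
    (h₅ : OnPath T u₃ m₁ m₂) (h₆ : OnPath T u₄ m₁ m₂)
    (hmult : 2 ≤ lapMult T 1) :
    (T.dist u₁ m₁ % 3 = 1 ∧ T.dist u₂ m₁ % 3 = 1) ∨
      (T.dist u₃ m₂ % 3 = 1 ∧ T.dist u₄ m₂ % 3 = 1) := by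
  by_contra hcon
  -- `a, b` and `c, d` are the two pairs of legs in the order for which the first of each pair has
  -- length not `1` modulo `3`
  have main : ∀ a b c d : V, List.Pairwise (· ≠ ·) [a, b, c, d] →
      ({u₁, u₂, u₃, u₄} : Set V) = {a, b, c, d} →
      OnPath T a b m₁ → OnPath T c d m₂ → OnPath T a m₂ m₁ → OnPath T b m₂ m₁ →
      OnPath T c m₁ m₂ → OnPath T d m₁ m₂ →
      T.dist a m₁ % 3 ≠ 1 → T.dist c m₂ % 3 ≠ 1 → False := by
    intro a b c d hd hset k₁ k₂ k₃ k₄ k₅ k₆ da dc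
    obtain ⟨x, hx, hxb, hx0⟩ := exists_eigenvector T hmult b
    exact hx0 (eigenvector_eq_zero T hT a b c d m₁ m₂ hd hmm (by rwa [← hset]) hmaj
      k₁ k₂ k₃ k₄ k₅ k₆ da dc x hx hxb)
  rw [not_or, not_and_or, not_and_or] at hcon
  simp only [List.pairwise_cons, List.mem_cons, List.not_mem_nil, or_false, forall_eq_or_imp,
    forall_eq, List.Pairwise.nil, and_true, IsEmpty.forall_iff, implies_true] at hdist main
  obtain ⟨⟨d12, d13, d14⟩, ⟨d23, d24⟩, d34⟩ := hdist
  obtain ⟨ha | ha, hc | hc⟩ := hcon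
  · exact main u₁ u₂ u₃ u₄ ⟨⟨d12, d13, d14⟩, ⟨d23, d24⟩, d34⟩ rfl h₁ h₂ h₃ h₄ h₅ h₆ ha hc
  · exact main u₁ u₂ u₄ u₃ ⟨⟨d12, d14, d13⟩, ⟨d24, d23⟩, d34.symm⟩ (by ext; simp; tauto)
      h₁ h₂.symm h₃ h₄ h₆ h₅ ha hc
  · exact main u₂ u₁ u₃ u₄ ⟨⟨d12.symm, d23, d24⟩, ⟨d13, d14⟩, d34⟩ (by ext; simp; tauto)
      h₁.symm h₂ h₄ h₃ h₅ h₆ ha hc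
  · exact main u₂ u₁ u₄ u₃ ⟨⟨d12.symm, d24, d23⟩, ⟨d14, d13⟩, d34.symm⟩ (by ext; simp; tauto)
      h₁.symm h₂.symm h₄ h₃ h₆ h₅ ha hc
end

section
/- Let T be a tree with p ≥ 4 pendant vertices, and let u1, u2, u3, u4 be four distinct pendant vertices of T. Let H be the unique minimal subtree of T containing all four of these vertices, i.e., H is the union of the paths P_{u_i,u_j} for 1 ≤ i < j ≤ 4. If m(T,1) ≥ p − 2, then m(H,1) ≥ 2, where m(H,1) is the multiplicity of 1 as an eigenvalue of the Laplacian matrix of H regarded as a graph in its own right. -/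
/-!
Fix the set `A` of the four chosen pendant vertices and let `H` be the vertex set of the subtree
they span. Inside the `1`-eigenspace of `T`, the vectors vanishing at the other `p - 4` pendant
vertices form a subspace of dimension at least `(p - 2) - (p - 4) = 2`, and restriction to `H`
maps this subspace injectively into the `1`-eigenspace of `H`.

The reason is a propagation of zeros along the branches of `T` hanging off `H`. Say that an edge
`v q` points towards `A` if every vertex of `A` lies beyond `q` as seen from `v`
(`PointsTo`). For eigenvalue `1`, the equation at a pendant vertex says that its neighbour carries
the value `0`; so a zero at every pendant vertex of a branch moves inwards one edge at a time, and
gives `x v = x q = 0` for every edge pointing towards `A` (`eq_zero_of_pointsTo`). Each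
vertex outside `H` is the tail of such an edge (`exists_pointsTo`), and an edge joining `H` to
its complement is such an edge (`eq_of_pointsTo_of_adj`). Hence `x` vanishes outside `H`, and
the edges leaving `H` contribute nothing to the eigenvalue equation at vertices of `H`.
-/

open SimpleGraph Matrix

variable {V : Type*}

/-! ### Distances in trees -/

/-- Each vertex of a tree has at most one neighbour closer to a given vertex `a`. -/
lemma closer_unique {T : SimpleGraph V} (hT : T.IsTree) {v q q' a : V}
    (hq : T.Adj v q) (hq' : T.Adj v q')
    (h : T.dist v a = T.dist q a + 1) (h' : T.dist v a = T.dist q' a + 1) : q = q' := by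
  obtain ⟨p, hp⟩ := hT.connected.exists_walk_length_eq_dist q a
  obtain ⟨p', hp'⟩ := hT.connected.exists_walk_length_eq_dist q' a
  have h1 : (Walk.cons hq p).IsPath :=
    Walk.isPath_of_length_eq_dist _ (by simp [hp, h])
  have h2 : (Walk.cons hq' p').IsPath :=
    Walk.isPath_of_length_eq_dist _ (by simp [hp', h'])
  have h3 := (hT.existsUnique_path v a).unique h1 h2
  simpa using congrArg Walk.snd h3

lemma dist_succ_or {T : SimpleGraph V} (hT : T.IsTree) {v w : V} (a : V) (h : T.Adj v w) :
    T.dist v a = T.dist w a + 1 ∨ T.dist w a = T.dist v a + 1 := by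
  simpa only [dist_comm (u := a)] using hT.dist_eq_dist_add_one_of_adj a h

lemma exists_closer {T : SimpleGraph V} (hT : T.IsTree) {v a : V} (h : v ≠ a) :
    ∃ q, T.Adj v q ∧ T.dist v a = T.dist q a + 1 := by
  obtain ⟨p, hp⟩ := hT.connected.exists_walk_length_eq_dist v a
  cases p with
  | nil => exact absurd rfl h
  | @cons _ q _ hq p =>
    refine ⟨q, hq, ?_⟩
    have h1 := dist_le p
    simp only [Walk.length_cons] at hp
    have := dist_succ_or hT a hq
    omega

/-- If the neighbours of `v` towards `a` and towards `b` differ, then `v` lies on the path from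
`a` to `b`. The proof walks from `v` to `b`, each step increasing the distance to `a`. -/
lemma onPath_of_ne {T : SimpleGraph V} (hT : T.IsTree) {a b : V} (n : ℕ) :
    ∀ v q c : V, T.dist v b = n → T.Adj v q → T.dist v a = T.dist q a + 1 →
      T.Adj v c → T.dist v b = T.dist c b + 1 → q ≠ c → OnPath T a b v := by
  induction n with
  | zero => intro v q c h1 _ _ _ h2; omega
  | succ n ih =>
    intro v q c h1 hq hqa hc hcb hne
    have hca : T.dist c a = T.dist v a + 1 :=
      (dist_succ_or hT a hc).resolve_left fun h => hne (closer_unique hT hq hc hqa h)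
    unfold OnPath
    by_cases hb : c = b
    · subst hb
      rw [dist_comm (u := a), dist_comm (u := a), hca, hcb, dist_self]
    · obtain ⟨c', hc', hcb'⟩ := exists_closer hT hb
      have := ih c v c' (by omega) hc.symm hca hc' hcb' (by rintro rfl; omega)
      unfold OnPath at this
      rw [dist_comm (u := a)] at this ⊢
      omega

/-! ### Edges pointing towards a set of terminals -/

/-- The edge `v q` points towards `A`: in a tree, removing it leaves all of `A` on the side
of `q`. -/
def PointsTo (T : SimpleGraph V) (A : Set V) (v q : V) : Prop :=
  T.Adj v q ∧ ∀ a ∈ A, T.dist v a = T.dist q a + 1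

/-- One step further away from `A`: all edges at `v` other than `v q` point to `v`. -/
lemma PointsTo.of_adj_ne {T : SimpleGraph V} (hT : T.IsTree) {A : Set V} {v q c : V}
    (h : PointsTo T A v q) (hc : T.Adj v c) (hne : c ≠ q) : PointsTo T A c v :=
  ⟨hc.symm, fun a ha => (dist_succ_or hT a hc).resolve_left fun h' =>
    hne (closer_unique hT hc h.1 h' (h.2 a ha))⟩

/-- The vertex set of the subtree spanned by `A`: the union of the paths between its members. -/
def hull (T : SimpleGraph V) (A : Set V) : Set V :=
  {w : V | ∃ a b : V, a ∈ A ∧ b ∈ A ∧ OnPath T a b w}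

lemma exists_pointsTo {T : SimpleGraph V} (hT : T.IsTree) {A : Set V} (hA : A.Nonempty) {v : V}
    (hv : v ∉ hull T A) : ∃ q, PointsTo T A v q := by
  have hvA : ∀ a ∈ A, v ≠ a := by
    rintro a ha rfl
    exact hv ⟨v, v, ha, ha, by simp [OnPath]⟩
  obtain ⟨a, ha⟩ := hA
  obtain ⟨q, hq, hqa⟩ := exists_closer hT (hvA a ha)
  refine ⟨q, hq, fun b hb => ?_⟩
  obtain ⟨c, hc, hcb⟩ := exists_closer hT (hvA b hb)
  by_cases hqc : q = c
  · rw [hqc, hcb]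
  · exact absurd ⟨a, b, ha, hb, onPath_of_ne hT _ v q c rfl hq hqa hc hcb hqc⟩ hv

lemma eq_of_pointsTo_of_adj {T : SimpleGraph V} (hT : T.IsTree) {A : Set V} {v q w : V}
    (h : PointsTo T A v q) (hw : w ∈ hull T A) (hvw : T.Adj v w) : w = q := by
  by_contra hne
  obtain ⟨a, b, ha, hb, hab⟩ := hw
  -- Otherwise `v` would be closer than `w` to both ends of a path through `w`.
  have h' := h.of_adj_ne hT hvw hne
  have h1 := h'.2 a ha
  have h2 := h'.2 b hb
  have h3 := hT.connected.dist_triangle (u := a) (v := v) (w := b)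
  unfold OnPath at hab
  rw [dist_comm (u := a) (v := w)] at hab
  rw [dist_comm (u := a) (v := v)] at h3
  omega

/-! ### The eigenvalue equation -/

open Classical in
lemma mem_eigenspace_lapMat [Fintype V] (G : SimpleGraph V) (x : V → ℝ) [DecidableEq V] :
    x ∈ Module.End.eigenspace (Matrix.toLin' (lapMat G)) 1 ↔
      ∀ v, ∑ w, (if G.Adj v w then x v - x w else 0) = x v := by
  rw [Module.End.mem_eigenspace_iff, one_smul, Matrix.toLin'_apply, funext_iff]
  refine forall_congr' fun v => ?_
  have : (lapMat G *ᵥ x) v = ∑ w, (if G.Adj v w then x v - x w else 0) := by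
    have hf : Finset.univ.filter (G.Adj v) = G.neighborFinset v := by ext; simp
    rw [← Finset.sum_filter, hf, Finset.sum_sub_distrib, Finset.sum_const, nsmul_eq_mul,
      card_neighborFinset_eq_degree, ← lapMatrix_mulVec_apply]
    unfold lapMat
    congr!
  rw [this]

open Classical in
/-- Zeros at the pendant vertices outside `A` spread along every edge pointing towards `A`; the
induction runs from the far end of a branch inwards, so it is on `N - d(v, a₀)`
with `a₀ ∈ A` fixed and `N` a bound for the distances to `a₀`. -/
lemma eq_zero_of_pointsTo [Fintype V] {T : SimpleGraph V} (hT : T.IsTree) {A : Set V}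
    (hA : A.Nonempty) {x : V → ℝ}
    (hx : ∀ v, ∑ w, (if T.Adj v w then x v - x w else 0) = x v)
    (h0 : ∀ v, IsPendant T v → v ∉ A → x v = 0) {v q : V} (h : PointsTo T A v q) :
    x v = 0 ∧ x q = 0 := by
  obtain ⟨a₀, ha₀⟩ := hA
  obtain ⟨N, hN⟩ : ∃ N, ∀ v, T.dist v a₀ ≤ N :=
    ⟨Finset.univ.sup fun v => T.dist v a₀, fun v =>
      Finset.le_sup (f := fun v => T.dist v a₀) (Finset.mem_univ v)⟩
  induction hn : N - T.dist v a₀ using Nat.strong_induction_on generalizing v q with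
  | _ n ih =>
    have hch : ∀ c, T.Adj v c → c ≠ q → x c = 0 ∧ x v = 0 := by
      intro c hc hne
      have h' := h.of_adj_ne hT hc hne
      have h1 := h'.2 a₀ ha₀
      have h2 := hN c
      exact ih (N - T.dist c a₀) (by omega) h' rfl
    have hv : x v = 0 := by
      by_cases hc : ∃ c, T.Adj v c ∧ c ≠ q
      · obtain ⟨c, hc, hne⟩ := hc
        exact (hch c hc hne).2
      · push Not at hc
        refine h0 v ?_ fun hvA => ?_
        · have : T.neighborSet v = {q} := by
            ext w
            simp only [mem_neighborSet, Set.mem_singleton_iff]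
            exact ⟨hc w, fun hw => hw ▸ h.1⟩
          rw [IsPendant, this, Set.ncard_singleton]
        · have := h.2 v hvA
          simp at this
    refine ⟨hv, ?_⟩
    have := hx v
    rw [Finset.sum_eq_single q, if_pos h.1, hv] at this
    · linarith
    · intro c _ hne
      split_ifs with hc
      · rw [hv, (hch c hc hne).1, sub_zero]
      · rfl
    · simp

lemma restrict_mem [Fintype V] {T : SimpleGraph V} (hT : T.IsTree) {A : Set V}
    (hA : A.Nonempty) {x : V → ℝ} [DecidableEq V]
    (hx : x ∈ Module.End.eigenspace (Matrix.toLin' (lapMat T)) 1)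
    (h0 : ∀ v, IsPendant T v → v ∉ A → x v = 0)
    [Fintype (hull T A)] [DecidableEq (hull T A)] :
    (fun w : hull T A => x w) ∈
      Module.End.eigenspace (Matrix.toLin' (lapMat (T.induce (hull T A)))) 1 := by
  classical
  rw [mem_eigenspace_lapMat] at hx ⊢
  intro v
  refine Eq.trans ?_ (hx v)
  -- Edges leaving the hull carry the value `0` at both ends.
  have hout : ∀ w ∉ hull T A, (if T.Adj v w then x v - x w else 0) = 0 := by
    intro w hw
    split_ifs with hvw
    · obtain ⟨q, hq⟩ := exists_pointsTo hT hA hw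
      have hvq := eq_of_pointsTo_of_adj hT hq v.2 hvw.symm
      have := eq_zero_of_pointsTo hT hA hx h0 hq
      rw [hvq, this.1, this.2, sub_zero]
    · rfl
  rw [← Finset.sum_subset (Finset.subset_univ (hull T A).toFinset)
    (fun w _ hw => hout w (by simpa using hw))]
  rw [Finset.sum_subtype (F := ‹Fintype (hull T A)›) (p := fun w => w ∈ hull T A) _
    (fun w => by simp) (fun w => if T.Adj v w then x v - x w else 0)]
  simp only [comap_adj, Function.Embedding.subtype_apply]

/-- Passing to the subtree spanned by `A` costs at most one dimension per pendant vertex of `T`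
not in `A`, as restriction is injective on the eigenvectors vanishing at those vertices. -/
lemma lapMult_hull [Finite V] {T : SimpleGraph V} (hT : T.IsTree) {A : Set V}
    (hA : A.Nonempty) :
    lapMult T 1 ≤ lapMult (T.induce (hull T A)) 1 + Nat.card {v : V // IsPendant T v ∧ v ∉ A} := by
  classical
  unfold lapMult
  let _ := Fintype.ofFinite V
  let E := Module.End.eigenspace (Matrix.toLin' (lapMat T)) 1
  -- Evaluation at the pendant vertices outside `A`.
  let φ : E →ₗ[ℝ] ({v : V // IsPendant T v ∧ v ∉ A} → ℝ) :=
    (LinearMap.funLeft ℝ ℝ Subtype.val).comp E.subtype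
  have hφ : ∀ x : LinearMap.ker φ, ∀ v, IsPendant T v → v ∉ A → x.1.1 v = 0 := fun x v hv hvA =>
    congrFun (LinearMap.mem_ker.1 x.2) ⟨v, hv, hvA⟩
  let ψ : LinearMap.ker φ →ₗ[ℝ] (hull T A → ℝ) :=
    ((LinearMap.funLeft ℝ ℝ Subtype.val).comp E.subtype).comp (LinearMap.ker φ).subtype
  have hinj : Function.Injective ψ := by
    rw [injective_iff_map_eq_zero]
    intro x hx
    ext v
    by_cases hv : v ∈ hull T A
    · exact congrFun hx ⟨v, hv⟩
    · obtain ⟨q, hq⟩ := exists_pointsTo hT hA hv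
      exact (eq_zero_of_pointsTo hT hA ((mem_eigenspace_lapMat T _).1 x.1.2) (hφ x) hq).1
  let _ := Fintype.ofFinite (hull T A)
  have hrange : LinearMap.range ψ ≤
      Module.End.eigenspace (Matrix.toLin' (lapMat (T.induce (hull T A)))) 1 := by
    rintro _ ⟨x, rfl⟩
    exact restrict_mem hT hA x.1.2 (hφ x)
  have h1 := Submodule.finrank_mono hrange
  rw [LinearMap.finrank_range_of_inj hinj] at h1
  have h2 := φ.finrank_range_add_finrank_ker
  have h3 := (LinearMap.range φ).finrank_le
  rw [Module.finrank_fintype_fun_eq_card, ← Nat.card_eq_fintype_card] at h3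
  have h4 : Module.finrank ℝ E ≤ Module.finrank ℝ
      (Module.End.eigenspace (Matrix.toLin' (lapMat (T.induce (hull T A)))) 1) +
      Nat.card {v : V // IsPendant T v ∧ v ∉ A} := by omega
  convert h4

/-- Let `T` be a tree with `p ≥ 4` pendant vertices, and let
`u₁, u₂, u₃, u₄` be four distinct pendant vertices of `T`. Let `H` be the unique
minimal subtree of `T` containing all four of these vertices, i.e. the union of the
paths `P_{uᵢ,uⱼ}`. If `m(T,1) ≥ p - 2`, then `m(H,1) ≥ 2`. -/
theorem stmt_6 {V : Type*} [Finite V] (T : SimpleGraph V) (hT : T.IsTree)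
    (p : ℕ) (hp : p = numPendant T) (hp4 : 4 ≤ p)
    (u₁ u₂ u₃ u₄ : V) (hdist : List.Pairwise (· ≠ ·) [u₁, u₂, u₃, u₄])
    (h₁ : IsPendant T u₁) (h₂ : IsPendant T u₂)
    (h₃ : IsPendant T u₃) (h₄ : IsPendant T u₄)
    (hmult : p - 2 ≤ lapMult T 1) :
    2 ≤ lapMult (T.induce {w : V | ∃ a b : V, a ∈ ({u₁, u₂, u₃, u₄} : Set V) ∧
      b ∈ ({u₁, u₂, u₃, u₄} : Set V) ∧ OnPath T a b w}) 1 := by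
  have hA : ({u₁, u₂, u₃, u₄} : Set V).Nonempty := ⟨u₁, by simp⟩
  have key := lapMult_hull hT hA
  have hcard : Nat.card {v : V // IsPendant T v ∧ v ∉ ({u₁, u₂, u₃, u₄} : Set V)} + 4
      = numPendant T := by
    have hsub : ({u₁, u₂, u₃, u₄} : Set V) ⊆ {v | IsPendant T v} := by
      rintro v (rfl | rfl | rfl | rfl) <;> assumption
    have h4 : ({u₁, u₂, u₃, u₄} : Set V).ncard = 4 := by
      simp only [List.pairwise_cons, List.mem_cons] at hdist
      rw [Set.ncard_insert_of_notMem, Set.ncard_insert_of_notMem, Set.ncard_pair] <;> grind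
    have h5 := Set.ncard_sdiff_add_ncard_of_subset hsub
    rw [h4] at h5
    exact h5
  change 2 ≤ lapMult (T.induce (hull T {u₁, u₂, u₃, u₄})) 1
  omega
end

section
/- Let T be a tree with exactly three pendant vertices u1, u2, u3 and a single major vertex m. Then 1 is an eigenvalue of the Laplacian matrix L(T) with multiplicity exactly one if and only if, after a suitable relabeling of the pendant vertices, one of the following holds: (Type Ω_A) d(u1,m) ≡ 1 mod 3, d(u2,m) ≡ 1 mod 3, and d(u3,m) ≢ 1 mod 3; or (Type Ω_B) d(u1,m) ≡ 2 mod 3, d(u2,m) ≡ 0 mod 3, and d(u3,m) ≡ 0 mod 3. -/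
/-!
Rooted at `m`, the tree is a spider: three legs of lengths `d i = d(uᵢ, m)` meeting at `m`
(`exists_spider`). On a leg read from its pendant vertex, the equation `L x = x` says that the
second entry is `0` and `x (k + 2) = x (k + 1) - x k`, so `x` is a multiple `a i` of the sequence
`1, 0, -1, -1, 0, 1, …` (`legSeq`), which is antiperiodic with period `3` and vanishes exactly at
the indices congruent to `1` modulo `3`. An eigenvector is therefore the same as a triple
`a : Fin 3 → ℝ` for which the three legs agree at `m` and the equation
`2 x(m) = ∑ x(neighbours of m)` holds. After changing the signs of the `a i`, these conditions
depend only on the residues `d i % 3` (`IsSpider.finrank_eigenspace`).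

If all residues are `1`, then `x(m) = 0` and one linear relation remains: dimension `2`. If exactly
two are `1`, the third multiple vanishes and the dimension is `1`; if exactly one is `1`, all
multiples vanish. If none is `1`, then `x(m)` determines everything and the equation at `m` reads
`2 x(m) = N x(m)`, with `N` the number of residues equal to `0`, so the dimension is `1` when
`N = 2` and `0` otherwise (`finrank_legSpace_eq_one_iff`).
-/

open SimpleGraph Matrix

variable {V : Type*}

/-! ### The tree as three legs joined at `m` -/

/-- In a tree rooted at `m`, every vertex other than `m` has a parent, the only neighbour nearer
to `m`; all its other neighbours are one step further away. -/
lemma exists_parent {T : SimpleGraph V} (hT : T.IsTree) (m : V) :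
    ∃ par : V → V, ∀ v, v ≠ m → T.Adj v (par v) ∧ T.dist (par v) m + 1 = T.dist v m ∧
      ∀ w, T.Adj v w → w ≠ par v → T.dist w m = T.dist v m + 1 := by
  have key : ∀ v, ∃ p, v ≠ m → T.Adj v p ∧ T.dist p m + 1 = T.dist v m ∧
      ∀ w, T.Adj v w → w ≠ p → T.dist w m = T.dist v m + 1 := by
    intro v
    by_cases hv : v = m
    · exact ⟨v, fun h => absurd hv h⟩
    obtain ⟨q, hq, hql⟩ := hT.connected.exists_path_of_dist v m
    cases q with
    | nil => exact absurd rfl hv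
    | @cons _ p _ hadj q' =>
      have hp : T.dist p m ≤ q'.length := dist_le q'
      rw [Walk.length_cons] at hql
      have h1 := hT.dist_eq_dist_add_one_of_adj m hadj
      rw [dist_comm (u := m), dist_comm (u := m)] at h1
      refine ⟨p, fun _ => ⟨hadj, by omega, fun w hw hwp => ?_⟩⟩
      have h2 := hT.dist_eq_dist_add_one_of_adj m hw
      rw [dist_comm (u := m), dist_comm (u := m)] at h2
      rcases h2 with h2 | h2
      · exfalso
        -- a geodesic from `w` would prolong to a second path from `v` to `m`
        obtain ⟨s, hs, hsl⟩ := hT.connected.exists_path_of_dist w m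
        have hsp : (Walk.cons hw s).IsPath := by
          apply Walk.isPath_of_length_eq_dist
          rw [Walk.length_cons]; omega
        have := (hT.existsUnique_path v m).unique hsp hq
        simp only [Walk.cons.injEq] at this
        exact hwp this.1
      · omega
  choose par hpar using key
  exact ⟨par, hpar⟩

/-- A description of `T` as three legs joined at `m`: `f i k` is the vertex at distance `k` from
the free end of leg `i`, for `k ≤ d i`, and `f i (d i) = m` (larger `k` carry no meaning). -/
structure IsSpider (T : SimpleGraph V) (m : V) (d : Fin 3 → ℕ) (f : Fin 3 → ℕ → V) : Prop where
  pos : ∀ i, 0 < d i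
  top : ∀ i, f i (d i) = m
  ne : ∀ i k, k < d i → f i k ≠ m
  inj : ∀ k i j l, k < d i → l < d j → f i k = f j l → i = j ∧ k = l
  cover : ∀ v, v ≠ m → ∃ i k, k < d i ∧ v = f i k
  adj_zero : ∀ i w, T.Adj (f i 0) w ↔ w = f i 1
  adj_succ : ∀ i k, k + 1 < d i → ∀ w, T.Adj (f i (k + 1)) w ↔ w = f i k ∨ w = f i (k + 2)
  adj_center : ∀ w, T.Adj m w ↔ ∃ i, w = f i (d i - 1)

/-- A tree with three pendant vertices and one major vertex is a spider; the legs arise by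
iterating the parent map from the pendant vertices. -/
lemma exists_spider [Finite V] {T : SimpleGraph V} (hT : T.IsTree) (u : Fin 3 → V) (m : V)
    (hu : Function.Injective u) (hp : ∀ i, IsPendant T (u i))
    (hpend : ∀ w, IsPendant T w → ∃ i, w = u i)
    (hm : IsMajor T m) (hmaj : ∀ w, IsMajor T w → w = m) :
    ∃ f, IsSpider T m (fun i => T.dist (u i) m) f := by
  obtain ⟨par, hpar⟩ := exists_parent hT m
  have hum : ∀ i, u i ≠ m := by
    intro i h
    have := hp i
    rw [h] at this
    unfold IsPendant at this
    unfold IsMajor at hm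
    omega
  let f : Fin 3 → ℕ → V := fun i k => par^[k] (u i)
  have f0 : ∀ i, f i 0 = u i := fun i => rfl
  have fs : ∀ i k, f i (k + 1) = par (f i k) := fun i k => Function.iterate_succ_apply' _ _ _
  have hd0 : ∀ v, T.dist v m = 0 ↔ v = m := fun v => hT.connected.dist_eq_zero_iff
  have hdist : ∀ i k, k ≤ T.dist (u i) m → T.dist (f i k) m + k = T.dist (u i) m := by
    intro i k
    induction k with
    | zero => intro _; rfl
    | succ k ih =>
      intro hk
      have h1 := ih (by omega)
      have hne : f i k ≠ m := by rw [Ne, ← hd0]; omega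
      have h2 := (hpar _ hne).2.1
      rw [← fs] at h2
      omega
  have hne : ∀ i k, k < T.dist (u i) m → f i k ≠ m := by
    intro i k hk
    have := hdist i k hk.le
    rw [Ne, ← hd0]; omega
  have hpos : ∀ i, 0 < T.dist (u i) m := fun i => hT.connected.pos_dist_of_ne (hum i)
  have htop : ∀ i, f i (T.dist (u i) m) = m := by
    intro i
    have := hdist i _ le_rfl
    rw [← hd0]; omega
  have hadj : ∀ i k, k < T.dist (u i) m → T.Adj (f i k) (f i (k + 1)) := by
    intro i k hk
    rw [fs]
    exact (hpar _ (hne i k hk)).1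
  have adj0 : ∀ i w, T.Adj (f i 0) w ↔ w = f i 1 := by
    intro i w
    obtain ⟨a, ha⟩ := Set.ncard_eq_one.1 (hp i)
    have hmem : ∀ w, T.Adj (f i 0) w ↔ w = a := by
      intro w
      rw [f0, ← mem_neighborSet, ha, Set.mem_singleton_iff]
    rw [hmem, (hmem _).1 (hadj i 0 (hpos i))]
  have adjS : ∀ i k, k + 1 < T.dist (u i) m →
      ∀ w, T.Adj (f i (k + 1)) w ↔ w = f i k ∨ w = f i (k + 2) := by
    intro i k hk w
    have h1 := (hadj i k (by omega)).symm
    have h2 := hadj i (k + 1) hk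
    have hdiff : f i k ≠ f i (k + 2) := by
      intro h
      have a1 := hdist i k (by omega)
      have a2 := hdist i (k + 2) (by omega)
      rw [h] at a1
      omega
    have hsub : ({f i k, f i (k + 2)} : Set V) ⊆ T.neighborSet (f i (k + 1)) := by
      rintro x (rfl | rfl)
      · exact h1
      · exact h2
    have hcard : (T.neighborSet (f i (k + 1))).ncard ≤ ({f i k, f i (k + 2)} : Set V).ncard := by
      rw [Set.ncard_pair hdiff]
      by_contra hlt
      exact hne i (k + 1) hk (hmaj _ (by unfold IsMajor; omega))
    have heq := Set.eq_of_subset_of_ncard_le hsub hcard (Set.toFinite _)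
    rw [← mem_neighborSet, ← heq]
    simp
  have hinj : ∀ k i j l, k < T.dist (u i) m → l < T.dist (u j) m → f i k = f j l →
      i = j ∧ k = l := by
    have zero_case : ∀ i j l, l + 1 < T.dist (u j) m → f i 0 = f j (l + 1) → False := by
      intro i j l hl h
      have e1 := (adj0 i (f j l)).1 (h ▸ (hadj j l (by omega)).symm)
      have e2 := (adj0 i (f j (l + 2))).1 (h ▸ hadj j (l + 1) hl)
      have a1 := hdist j l (by omega)
      have a2 := hdist j (l + 2) (by omega)
      rw [e1] at a1
      rw [e2] at a2
      omega
    intro k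
    induction k with
    | zero =>
      intro i j l hk hl h
      cases l with
      | zero => exact ⟨hu h, rfl⟩
      | succ l => exact (zero_case i j l hl h).elim
    | succ k ih =>
      intro i j l hk hl h
      cases l with
      | zero => exact (zero_case j i k hk h.symm).elim
      | succ l =>
        have h1 : T.Adj (f i (k + 1)) (f j l) := h ▸ (hadj j l (by omega)).symm
        rcases (adjS i k hk _).1 h1 with h2 | h2
        · have := ih i j l (by omega) (by omega) h2.symm
          exact ⟨this.1, by rw [this.2]⟩
        · exfalso
          have a1 := hdist j l (by omega)
          have a2 := hdist i (k + 2) (by omega)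
          have a3 := hdist j (l + 1) (by omega)
          have a4 := hdist i (k + 1) (by omega)
          rw [h2] at a1
          rw [h] at a4
          omega
  have hcover : ∀ v, v ≠ m → ∃ i k, k < T.dist (u i) m ∧ v = f i k := by
    obtain ⟨B, hB⟩ := (Set.finite_range fun v => T.dist v m).bddAbove
    have hB' : ∀ v, T.dist v m ≤ B := fun v => hB ⟨v, rfl⟩
    -- walking away from `m` ends at a pendant vertex, so induct on the remaining room
    have main : ∀ n v, B - T.dist v m = n → v ≠ m → ∃ i k, k < T.dist (u i) m ∧ v = f i k := by
      intro n
      induction n using Nat.strong_induction_on with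
      | _ n ih =>
        intro v hn hv
        obtain ⟨hvp, hvd, hvo⟩ := hpar v hv
        by_cases hpv : IsPendant T v
        · obtain ⟨i, hi⟩ := hpend v hpv
          exact ⟨i, 0, hpos i, hi⟩
        have hex : ∃ w, T.Adj v w ∧ w ≠ par v := by
          by_contra hcon
          push Not at hcon
          apply hpv
          unfold IsPendant
          rw [Set.ncard_eq_one]
          refine ⟨par v, Set.ext fun w => ⟨fun hw => hcon w hw, ?_⟩⟩
          rintro rfl
          exact hvp
        obtain ⟨w, hw, hwp⟩ := hex
        have hwd := hvo w hw hwp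
        have hwB := hB' w
        have hwm : w ≠ m := by rw [Ne, ← hd0]; omega
        obtain ⟨i, k, hk, hwf⟩ := ih (B - T.dist w m) (by omega) w rfl hwm
        have hvw : v = par w := by
          by_contra hcon
          have := (hpar w hwm).2.2 v hw.symm hcon
          omega
        refine ⟨i, k + 1, ?_, by rw [fs, ← hwf, hvw]⟩
        have a := hdist i k hk.le
        rw [← hwf] at a
        have := hT.connected.pos_dist_of_ne hv
        omega
    exact fun v hv => main _ v rfl hv
  refine ⟨f, hpos, htop, hne, hinj, hcover, adj0, adjS, fun w => ⟨fun hw => ?_, ?_⟩⟩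
  · obtain ⟨i, k, hk, hwf⟩ := hcover w hw.ne'
    have h1 : T.dist w m = 1 := dist_eq_one_iff_adj.2 hw.symm
    have a := hdist i k hk.le
    rw [← hwf] at a
    exact ⟨i, by rw [hwf]; congr 1; omega⟩
  · rintro ⟨i, rfl⟩
    have h := hadj i (T.dist (u i) m - 1) (by have := hpos i; omega)
    rw [Nat.sub_add_cancel (hpos i), htop] at h
    exact h.symm

/-! ### Eigenvectors on a spider -/

/-- On a spider, the eigenvalue equation for `1` amounts to a three-term recurrence along each
leg, started by the value `0` next to the pendant vertex, and one balance condition at `m`. -/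
lemma IsSpider.eigen_iff [Fintype V] [DecidableEq V] {T : SimpleGraph V} [DecidableRel T.Adj]
    {m : V} {d : Fin 3 → ℕ} {f : Fin 3 → ℕ → V} (h : IsSpider T m d f) (x : V → ℝ) :
    T.lapMatrix ℝ *ᵥ x = (1 : ℝ) • x ↔
      (∀ i, x (f i 1) = 0) ∧
      (∀ i k, k + 1 < d i → x (f i (k + 2)) = x (f i (k + 1)) - x (f i k)) ∧
      2 * x m = ∑ i, x (f i (d i - 1)) := by
  have e0 : ∀ i, T.neighborFinset (f i 0) = {f i 1} := by
    intro i; ext w; simp [h.adj_zero]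
  have eS : ∀ i k, k + 1 < d i → T.neighborFinset (f i (k + 1)) = {f i k, f i (k + 2)} := by
    intro i k hk; ext w; simp [h.adj_succ i k hk]
  have neS : ∀ i k, k + 1 < d i → f i k ≠ f i (k + 2) := by
    intro i k hk heq
    by_cases h2 : k + 2 < d i
    · have := (h.inj k i i (k + 2) (by omega) h2 heq).2
      omega
    · have h3 : k + 2 = d i := by omega
      rw [h3, h.top] at heq
      exact h.ne i k (by omega) heq
  have injm : Function.Injective fun i => f i (d i - 1) := by
    intro i j hij
    have hi := h.pos i
    have hj := h.pos j
    exact (h.inj _ i j _ (by omega) (by omega) hij).1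
  have em : T.neighborFinset m = Finset.univ.image fun i => f i (d i - 1) := by
    ext w; simp [h.adj_center, eq_comm]
  have E0 : ∀ i, (T.lapMatrix ℝ *ᵥ x) (f i 0) = x (f i 0) ↔ x (f i 1) = 0 := by
    intro i
    rw [lapMatrix_mulVec_apply, ← card_neighborFinset_eq_degree, e0]
    simp
  have ES : ∀ i k, k + 1 < d i → ((T.lapMatrix ℝ *ᵥ x) (f i (k + 1)) = x (f i (k + 1)) ↔
      x (f i (k + 2)) = x (f i (k + 1)) - x (f i k)) := by
    intro i k hk
    rw [lapMatrix_mulVec_apply, ← card_neighborFinset_eq_degree, eS i k hk,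
      Finset.card_pair (neS i k hk), Finset.sum_pair (neS i k hk)]
    push_cast
    constructor <;> intro hh <;> linarith
  have EM : (T.lapMatrix ℝ *ᵥ x) m = x m ↔ 2 * x m = ∑ i, x (f i (d i - 1)) := by
    rw [lapMatrix_mulVec_apply, ← card_neighborFinset_eq_degree, em,
      Finset.card_image_of_injective _ injm, Finset.sum_image fun a _ b _ hab => injm hab]
    simp only [Finset.card_univ, Fintype.card_fin]
    push_cast
    constructor <;> intro hh <;> linarith
  rw [one_smul]
  constructor
  · intro hx
    exact ⟨fun i => (E0 i).1 (congrFun hx _), fun i k hk => (ES i k hk).1 (congrFun hx _),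
      EM.1 (congrFun hx _)⟩
  · rintro ⟨h0, hS, hM⟩
    funext v
    by_cases hv : v = m
    · rw [hv]; exact EM.2 hM
    obtain ⟨i, k, hk, rfl⟩ := h.cover v hv
    cases k with
    | zero => exact (E0 i).2 (h0 i)
    | succ k => exact (ES i k hk).2 (hS i k hk)

/-- The solution `1, 0, -1, -1, 0, 1, …` of the recurrence along a leg. -/
def legSeq : ℕ → ℝ
  | 0 => 1
  | 1 => 0
  | n + 2 => legSeq (n + 1) - legSeq n

/-- Up to sign, the value of `legSeq d` in terms of `r = d % 3`. -/
def legEnd (r : ℕ) : ℝ := if r = 1 then 0 else 1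

/-- Up to the same sign, the value of `legSeq (d - 1)` in terms of `r = d % 3`. -/
def legPrev (r : ℕ) : ℝ := if r = 2 then 0 else 1

lemma legSeq_add_three (n : ℕ) : legSeq (n + 3) = -legSeq n := by
  have h1 : legSeq (n + 3) = legSeq (n + 2) - legSeq (n + 1) := rfl
  have h2 : legSeq (n + 2) = legSeq (n + 1) - legSeq n := rfl
  linarith

/-- Since `legSeq` changes sign under a shift by `3`, its values at `d` and `d - 1` are determined
by `d % 3` up to a common sign. -/
lemma exists_sign (n : ℕ) : ∃ e : ℝ, e * e = 1 ∧
    legSeq (n + 1) = e * legEnd ((n + 1) % 3) ∧ legSeq n = e * legPrev ((n + 1) % 3) := by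
  induction n using Nat.strong_induction_on with
  | _ n ih =>
    match n, ih with
    | 0, _ => exact ⟨1, by norm_num [legSeq, legEnd, legPrev]⟩
    | 1, _ => exact ⟨-1, by norm_num [legSeq, legEnd, legPrev]⟩
    | 2, _ => exact ⟨-1, by norm_num [legSeq, legEnd, legPrev]⟩
    | n + 3, ih =>
      obtain ⟨e, h1, h2, h3⟩ := ih n (by omega)
      have hmod : (n + 3 + 1) % 3 = (n + 1) % 3 := by omega
      have h4 : legSeq (n + 3 + 1) = -legSeq (n + 1) := legSeq_add_three (n + 1)
      refine ⟨-e, by linarith, ?_, ?_⟩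
      · rw [h4, hmod, h2]; ring
      · rw [legSeq_add_three, hmod, h3]; ring

/-- The space of pendant values (normalised by signs) that extend to an eigenvector: all legs must
agree at `m`, and the balance condition must hold there. It depends only on the leg lengths
modulo `3`. -/
def legSpace (r : Fin 3 → ℕ) : Submodule ℝ (Fin 3 → ℝ) where
  carrier := {a | (∀ i, a i * legEnd (r i) = a 0 * legEnd (r 0)) ∧
    2 * (a 0 * legEnd (r 0)) = ∑ i, a i * legPrev (r i)}
  zero_mem' := by simp
  add_mem' := by
    rintro a b ⟨ha, ha'⟩ ⟨hb, hb'⟩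
    refine ⟨fun i => ?_, ?_⟩
    · simp only [Pi.add_apply, add_mul, ha i, hb i]
    · simp only [Pi.add_apply, add_mul, Finset.sum_add_distrib, ← ha', ← hb']; ring
  smul_mem' := by
    rintro c a ⟨ha, ha'⟩
    refine ⟨fun i => ?_, ?_⟩
    · simp only [Pi.smul_apply, smul_eq_mul, mul_assoc, ha i]
    · simp only [Pi.smul_apply, smul_eq_mul, mul_assoc, ← Finset.mul_sum, ← ha']; ring

/-- Reading off the pendant values identifies the eigenspace of `1` with `legSpace`. -/
lemma IsSpider.finrank_eigenspace [Fintype V] [DecidableEq V] {T : SimpleGraph V}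
    [DecidableRel T.Adj] {m : V} {d : Fin 3 → ℕ} {f : Fin 3 → ℕ → V} (h : IsSpider T m d f) :
    Module.finrank ℝ (Module.End.eigenspace (Matrix.toLin' (T.lapMatrix ℝ)) 1) =
      Module.finrank ℝ (legSpace fun i => d i % 3) := by
  have hmem : ∀ x, x ∈ Module.End.eigenspace (Matrix.toLin' (T.lapMatrix ℝ)) 1 ↔
      T.lapMatrix ℝ *ᵥ x = (1 : ℝ) • x := by
    intro x
    rw [Module.End.mem_eigenspace_iff, Matrix.toLin'_apply]
  have hsign : ∀ i, ∃ e : ℝ, e * e = 1 ∧ legSeq (d i) = e * legEnd (d i % 3) ∧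
      legSeq (d i - 1) = e * legPrev (d i % 3) := by
    intro i
    have := exists_sign (d i - 1)
    rwa [Nat.sub_add_cancel (h.pos i)] at this
  choose e he hend hprev using hsign
  -- the recurrence makes an eigenvector a multiple of `legSeq` on each leg
  have hrec : ∀ x, T.lapMatrix ℝ *ᵥ x = (1 : ℝ) • x → ∀ i k, k ≤ d i →
      x (f i k) = x (f i 0) * legSeq k := by
    intro x hx i
    obtain ⟨h0, hS, -⟩ := (h.eigen_iff x).1 hx
    intro k
    induction k using Nat.strong_induction_on with
    | _ k ih =>
      match k, ih with
      | 0, _ => intro _; simp [legSeq]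
      | 1, _ => intro _; simp [legSeq, h0]
      | k + 2, ih =>
        intro hk
        rw [hS i k (by omega), ih (k + 1) (by omega) (by omega), ih k (by omega) (by omega)]
        simp only [legSeq]; ring
  let L : (V → ℝ) →ₗ[ℝ] (Fin 3 → ℝ) :=
    { toFun := fun x i => e i * x (f i 0)
      map_add' := by intro x y; funext i; simp [mul_add]
      map_smul' := by intro c x; funext i; simp; ring }
  have hL : ∀ x i, L x i = e i * x (f i 0) := fun _ _ => rfl
  have hmaps : ∀ x ∈ Module.End.eigenspace (Matrix.toLin' (T.lapMatrix ℝ)) 1,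
      L x ∈ legSpace fun i => d i % 3 := by
    intro x hx
    rw [hmem] at hx
    have hc : ∀ i, L x i * legEnd (d i % 3) = x m := by
      intro i
      have := hrec x hx i (d i) le_rfl
      rw [h.top, hend] at this
      rw [this, hL]; ring
    refine ⟨fun i => by rw [hc, hc], ?_⟩
    rw [hc, ((h.eigen_iff x).1 hx).2.2]
    refine Finset.sum_congr rfl fun i _ => ?_
    rw [hrec x hx i _ (Nat.sub_le _ _), hprev, hL]; ring
  refine LinearEquiv.finrank_eq (LinearEquiv.ofBijective (L.restrict hmaps) ⟨?_, ?_⟩)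
  · rw [injective_iff_map_eq_zero]
    rintro ⟨x, hx⟩ hzero
    have hx' := (hmem x).1 hx
    have hz : ∀ i, x (f i 0) = 0 := by
      intro i
      have h1 : L x i = 0 := congrFun (congrArg Subtype.val hzero) i
      rw [hL] at h1
      have h2 : e i ≠ 0 := fun h0 => by simpa [h0] using he i
      exact (mul_eq_zero.1 h1).resolve_left h2
    apply Subtype.ext
    funext v
    change x v = 0
    by_cases hv : v = m
    · rw [hv, ← h.top 0, hrec x hx' 0 _ le_rfl, hz, zero_mul]
    · obtain ⟨i, k, hk, rfl⟩ := h.cover v hv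
      rw [hrec x hx' i k hk.le, hz, zero_mul]
  · rintro ⟨a, ha, ha'⟩
    have hval : ∀ v, ∃ y : ℝ, (v = m → y = a 0 * legEnd (d 0 % 3)) ∧
        ∀ i k, k < d i → v = f i k → y = a i * e i * legSeq k := by
      intro v
      by_cases hv : v = m
      · exact ⟨_, fun _ => rfl, fun i k hk hvk => absurd (hvk ▸ hv) (h.ne i k hk)⟩
      · obtain ⟨i, k, hk, hvk⟩ := h.cover v hv
        refine ⟨a i * e i * legSeq k, fun h' => absurd h' hv, fun j l hl hvl => ?_⟩
        obtain ⟨rfl, rfl⟩ := h.inj k i j l hk hl (hvk ▸ hvl)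
        rfl
    choose x hxm hxf using hval
    have hx : ∀ i k, k ≤ d i → x (f i k) = a i * e i * legSeq k := by
      intro i k hk
      rcases hk.lt_or_eq with hk | rfl
      · exact hxf _ i k hk rfl
      · rw [hxm _ (h.top i), hend, ← ha i]
        linear_combination (-(a i * legEnd (d i % 3))) * he i
    have hxE : T.lapMatrix ℝ *ᵥ x = (1 : ℝ) • x := by
      refine (h.eigen_iff x).2 ⟨fun i => ?_, fun i k hk => ?_, ?_⟩
      · rw [hx i 1 (h.pos i)]; simp [legSeq]
      · rw [hx i _ (by omega), hx i _ (by omega), hx i _ (by omega)]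
        simp only [legSeq]; ring
      · rw [hxm m rfl, ha']
        refine Finset.sum_congr rfl fun i _ => ?_
        rw [hx i _ (Nat.sub_le _ _), hprev]
        linear_combination (-(a i * legPrev (d i % 3))) * he i
    refine ⟨⟨x, (hmem x).2 hxE⟩, Subtype.ext (funext fun i => ?_)⟩
    change L x i = a i
    rw [hL, hx i 0 (Nat.zero_le _)]
    simp only [legSeq]
    linear_combination (a i) * he i

/-! ### The dimension of the solution space -/

/-- The condition on the three residues, with all relabellings written out. -/
def GoodResidues (p q s : ℕ) : Prop :=
  (p = 1 ∧ q = 1 ∧ s ≠ 1) ∨ (p = 1 ∧ s = 1 ∧ q ≠ 1) ∨ (q = 1 ∧ s = 1 ∧ p ≠ 1) ∨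
  (p = 2 ∧ q = 0 ∧ s = 0) ∨ (q = 2 ∧ p = 0 ∧ s = 0) ∨ (s = 2 ∧ p = 0 ∧ q = 0)

lemma mem_legSpace {r : Fin 3 → ℕ} {a : Fin 3 → ℝ} : a ∈ legSpace r ↔
    a 1 * legEnd (r 1) = a 0 * legEnd (r 0) ∧ a 2 * legEnd (r 2) = a 0 * legEnd (r 0) ∧
    2 * (a 0 * legEnd (r 0)) =
      a 0 * legPrev (r 0) + a 1 * legPrev (r 1) + a 2 * legPrev (r 2) := by
  change ((∀ i, a i * legEnd (r i) = a 0 * legEnd (r 0)) ∧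
    2 * (a 0 * legEnd (r 0)) = ∑ i, a i * legPrev (r i)) ↔ _
  simp [Fin.forall_fin_succ, Fin.sum_univ_succ, and_assoc, add_assoc]

lemma finrank_legSpace_eq_one_iff (r : Fin 3 → ℕ) (hr : ∀ i, r i < 3) :
    Module.finrank ℝ (legSpace r) = 1 ↔ GoodResidues (r 0) (r 1) (r 2) := by
  have key : Module.finrank ℝ (legSpace r) = 1 ↔
      ∃ a ∈ legSpace r, a ≠ 0 ∧ ∀ b ∈ legSpace r, ∃ t : ℝ, t • a = b := by
    rw [finrank_eq_one_iff']
    constructor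
    · rintro ⟨⟨a, ha⟩, hne, hspan⟩
      refine ⟨a, ha, fun h0 => hne (Subtype.ext h0), fun b hb => ?_⟩
      obtain ⟨t, ht⟩ := hspan ⟨b, hb⟩
      exact ⟨t, congrArg Subtype.val ht⟩
    · rintro ⟨a, ha, hne, hspan⟩
      refine ⟨⟨a, ha⟩, fun h0 => hne (congrArg Subtype.val h0), fun ⟨b, hb⟩ => ?_⟩
      obtain ⟨t, ht⟩ := hspan b hb
      exact ⟨t, Subtype.ext ht⟩
  rw [key]
  have ext3 : ∀ a b : Fin 3 → ℝ, a 0 = b 0 → a 1 = b 1 → a 2 = b 2 → a = b := by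
    intro a b h0 h1 h2
    funext i
    fin_cases i
    exacts [h0, h1, h2]
  have b0 := hr 0
  have b1 := hr 1
  have b2 := hr 2
  simp only [mem_legSpace]
  generalize r 0 = p at *
  generalize r 1 = q at *
  generalize r 2 = s at *
  constructor
  · rintro ⟨a, ⟨h1, h2, h3⟩, hne, hspan⟩
    by_contra hbad
    by_cases hall : p = 1 ∧ q = 1 ∧ s = 1
    · -- the space is the plane `a 0 + a 1 + a 2 = 0`, which no single vector spans
      obtain ⟨rfl, rfl, rfl⟩ := hall
      obtain ⟨t, ht⟩ := hspan ![1, -1, 0] (by simp [legEnd, legPrev])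
      obtain ⟨t', ht'⟩ := hspan ![0, 1, -1] (by simp [legEnd, legPrev])
      have e0 := congrFun ht 0
      have e2 := congrFun ht 2
      have e0' := congrFun ht' 0
      have e2' := congrFun ht' 2
      simp at e0 e2 e0' e2'
      rcases e2 with e2 | e2 <;> simp [e2] at e0 e2'
    · apply hne
      unfold GoodResidues at hbad
      clear hspan hr hne key
      interval_cases p <;> interval_cases q <;> interval_cases s <;>
        first
        | (exfalso; revert hbad; simp; done)
        | (exfalso; revert hall; simp; done)
        | (norm_num [legEnd, legPrev] at h1 h2 h3
           apply ext3 <;> simp <;> linarith)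
  · rintro (⟨rfl, rfl, h⟩ | ⟨rfl, rfl, h⟩ | ⟨rfl, rfl, h⟩ | ⟨rfl, rfl, rfl⟩ | ⟨rfl, rfl, rfl⟩ |
      ⟨rfl, rfl, rfl⟩)
    · refine ⟨![1, -1, 0], by simp [legEnd, legPrev], fun h0 => by simpa using congrFun h0 0, ?_⟩
      rintro b ⟨h1, h2, h3⟩
      simp [legEnd, legPrev, h] at h1 h2 h3
      exact ⟨b 0, ext3 _ _ (by simp) (by simp; simp [h2] at h3; linarith) (by simp [h2])⟩
    · refine ⟨![1, 0, -1], by simp [legEnd, legPrev], fun h0 => by simpa using congrFun h0 0, ?_⟩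
      rintro b ⟨h1, h2, h3⟩
      simp [legEnd, legPrev, h] at h1 h2 h3
      exact ⟨b 0, ext3 _ _ (by simp) (by simp [h1]) (by simp; simp [h1] at h3; linarith)⟩
    · refine ⟨![0, 1, -1], by simp [legEnd, legPrev], fun h0 => by simpa using congrFun h0 1, ?_⟩
      rintro b ⟨h1, h2, h3⟩
      have h4 : b 0 = 0 := by simpa [legEnd, h] using h1.symm
      simp [legEnd, legPrev, h4] at h3
      exact ⟨b 1, ext3 _ _ (by simp [h4]) (by simp) (by simp; linarith)⟩
    all_goals
      refine ⟨![1, 1, 1], by simp [legEnd, legPrev]; try norm_num, fun h0 => by simpa using congrFun h0 0, ?_⟩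
      rintro b ⟨h1, h2, h3⟩
      norm_num [legEnd, legPrev] at h1 h2 h3
      exact ⟨b 0, ext3 _ _ (by simp) (by simp; linarith) (by simp; linarith)⟩

/-- Relabelling the pendant vertices is a permutation because the three are distinct. -/
lemma exists_permuted_iff (u₁ u₂ u₃ : V) (h12 : u₁ ≠ u₂) (h13 : u₁ ≠ u₃) (h23 : u₂ ≠ u₃)
    (g : V → ℕ) :
    (∃ w₁ w₂ w₃ : V, ({w₁, w₂, w₃} : Set V) = ({u₁, u₂, u₃} : Set V) ∧
        ((g w₁ = 1 ∧ g w₂ = 1 ∧ g w₃ ≠ 1) ∨ (g w₁ = 2 ∧ g w₂ = 0 ∧ g w₃ = 0))) ↔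
      GoodResidues (g u₁) (g u₂) (g u₃) := by
  constructor
  · rintro ⟨w₁, w₂, w₃, hset, hw⟩
    have hu : ∀ z, (z = w₁ ∨ z = w₂ ∨ z = w₃) ↔ (z = u₁ ∨ z = u₂ ∨ z = u₃) := by
      intro z
      simpa using (Set.ext_iff.1 hset z)
    have a1 := (hu u₁).2 (by simp)
    have a2 := (hu u₂).2 (by simp)
    have a3 := (hu u₃).2 (by simp)
    unfold GoodResidues
    rcases a1 with rfl | rfl | rfl <;> rcases a2 with rfl | rfl | rfl <;>
      rcases a3 with rfl | rfl | rfl <;> first | contradiction | (clear hu hset; omega)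
  · have p2 : ({u₁, u₃, u₂} : Set V) = {u₁, u₂, u₃} := by
      ext z; simp only [Set.mem_insert_iff, Set.mem_singleton_iff]; tauto
    have p3 : ({u₂, u₃, u₁} : Set V) = {u₁, u₂, u₃} := by
      ext z; simp only [Set.mem_insert_iff, Set.mem_singleton_iff]; tauto
    have p4 : ({u₂, u₁, u₃} : Set V) = {u₁, u₂, u₃} := by
      ext z; simp only [Set.mem_insert_iff, Set.mem_singleton_iff]; tauto
    have p5 : ({u₃, u₁, u₂} : Set V) = {u₁, u₂, u₃} := by
      ext z; simp only [Set.mem_insert_iff, Set.mem_singleton_iff]; tauto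
    rintro (h | h | h | h | h | h)
    · exact ⟨_, _, _, rfl, .inl h⟩
    · exact ⟨_, _, _, p2, .inl h⟩
    · exact ⟨_, _, _, p3, .inl h⟩
    · exact ⟨_, _, _, rfl, .inr h⟩
    · exact ⟨_, _, _, p4, .inr h⟩
    · exact ⟨_, _, _, p5, .inr h⟩

/-- Let `T` be a tree with exactly three pendant vertices
`u₁, u₂, u₃` and a single major vertex `m`. Then `1` is an eigenvalue of the Laplacian
matrix `L(T)` with multiplicity exactly one if and only if, after a suitable relabeling
of the pendant vertices, one of the following holds:
(Type `Ω_A`) `d(u₁,m) ≡ 1`, `d(u₂,m) ≡ 1` and `d(u₃,m) ≢ 1 (mod 3)`; or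
(Type `Ω_B`) `d(u₁,m) ≡ 2`, `d(u₂,m) ≡ 0` and `d(u₃,m) ≡ 0 (mod 3)`. -/
theorem stmt_8 {V : Type*} [Finite V] (T : SimpleGraph V) (hT : T.IsTree)
    (u₁ u₂ u₃ m : V) (hdist : List.Pairwise (· ≠ ·) [u₁, u₂, u₃])
    (h₁ : IsPendant T u₁) (h₂ : IsPendant T u₂) (h₃ : IsPendant T u₃)
    (hpend : ∀ w : V, IsPendant T w → w ∈ ({u₁, u₂, u₃} : Set V))
    (hm : IsMajor T m) (hmaj : ∀ w : V, IsMajor T w → w = m) :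
    lapMult T 1 = 1 ↔
      ∃ w₁ w₂ w₃ : V, ({w₁, w₂, w₃} : Set V) = ({u₁, u₂, u₃} : Set V) ∧
        ((T.dist w₁ m % 3 = 1 ∧ T.dist w₂ m % 3 = 1 ∧ T.dist w₃ m % 3 ≠ 1) ∨
          (T.dist w₁ m % 3 = 2 ∧ T.dist w₂ m % 3 = 0 ∧ T.dist w₃ m % 3 = 0)) := by
  have hd := hdist
  simp only [List.pairwise_cons, List.mem_cons, List.not_mem_nil, or_false, forall_eq_or_imp,
    forall_eq] at hd
  obtain ⟨⟨h12, h13⟩, h23, -⟩ := hd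
  rw [exists_permuted_iff u₁ u₂ u₃ h12 h13 h23 fun w => T.dist w m % 3]
  let := Fintype.ofFinite V
  let := Classical.decEq V
  let : DecidableRel T.Adj := Classical.decRel _
  obtain ⟨f, hf⟩ := exists_spider hT ![u₁, u₂, u₃] m
    (by
      intro i j hij
      fin_cases i <;> fin_cases j <;> simp_all)
    (by
      intro i
      fin_cases i
      exacts [h₁, h₂, h₃])
    (by
      intro w hw
      rcases hpend w hw with h | h | h
      exacts [⟨0, h⟩, ⟨1, h⟩, ⟨2, h⟩])
    hm hmaj
  have hfr := finrank_legSpace_eq_one_iff (fun i => T.dist (![u₁, u₂, u₃] i) m % 3)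
    fun i => Nat.mod_lt _ (by norm_num)
  rw [← hf.finrank_eigenspace] at hfr
  exact hfr
end
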